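/- Fix a positive integer k. If c_1 < c_2 < c_3 < ... is the increasing enumeration of the cyclic numbers, then c_1^k + c_2^k + ... + c_n^k is asymptotically equivalent to n^(k+1) · e^(kγ) · (log log log n)^k / (k+1) as n → ∞, where γ is the Euler–Mascheroni constant. -/

import Mathlib

open Filter Asymptotics Real

/-- A positive integer `n` is *cyclic* if `gcd(n, φ(n)) = 1`. -/
def IsCyclicNum (n : ℕ) : Prop := 0 < n ∧ Nat.gcd n (Nat.totient n) = 1

instance : DecidablePred IsCyclicNum := fun n =>
  decidable_of_iff (0 < n ∧ Nat.gcd n (Nat.totient n) = 1) Iff.rfl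

/-- The `n`-th cyclic number, indexed from 1: `cyclicNum 1 = 1`, `cyclicNum 2 = 2`, .... -/
noncomputable def cyclicNum (n : ℕ) : ℕ := Nat.nth IsCyclicNum (n - 1)

/-- The number of cyclic numbers less than or equal to the real number `x`. -/
noncomputable def cyclicCount (x : ℝ) : ℕ :=
  ((Finset.range (⌊x⌋₊ + 1)).filter IsCyclicNum).card

/-!
A squarefree `n` fails to be cyclic exactly when it has prime factors `p` and `q` with
`q ≡ 1 [MOD p]`. For a fixed prime `p`, an integer `n ≤ N` has about `log log N / (p - 1)` prime
factors `q ≡ 1 [MOD p]`. So for `ε > 0`, almost no cyclic `n ≤ N` has a prime factor below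
`(log log N) ^ (1 - ε)`, whereas almost every `n` without prime factors below
`(log log N) ^ (1 + ε)` is cyclic. By the sieve and Mertens' third theorem, the cyclic numbers up
to `N` number about `exp (-γ) N / log log log N`. The first claim is Turán's variance inequality,
fed by a lower bound for `∑ 1 / q` over primes `q ≡ 1 [MOD p]` that is uniform in `p`. It comes
from effective lower bounds for `L(1 + η, χ)`: the `3-4-1` inequality for complex characters and
Monsky's argument for real ones.

Inverting the count gives `c_n ~ exp γ * n * log log log n`. The `k`-th powers of the right-hand
side are asymptotic to the increments of the claimed main term, because `log log log n` varies
slowly.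
-/

namespace CyclicNumbers

open Finset
open scoped Topology Nat

/-! ### Mertens' first theorem -/

lemma primeFactors_factorial (n : ℕ) : (n !).primeFactors = n.primesLE := by
  ext p
  simp only [Nat.mem_primeFactors, Nat.mem_primesLE]
  exact ⟨fun ⟨hp, hdvd, _⟩ ↦ ⟨hp.dvd_factorial.1 hdvd, hp⟩,
    fun ⟨hle, hp⟩ ↦ ⟨hp, hp.dvd_factorial.2 hle, n.factorial_ne_zero⟩⟩

lemma log_factorial_eq_sum_primesLE (n : ℕ) :
    log n ! = ∑ p ∈ n.primesLE, ((n !).factorization p : ℝ) * log p := by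
  rw [Real.log_nat_eq_sum_factorization, Finsupp.sum, Nat.support_factorization,
    primeFactors_factorial]

lemma factorization_factorial_le_div_sub_one (n : ℕ) {p : ℕ} (hp : p.Prime) :
    ((n !).factorization p : ℝ) ≤ n / ((p : ℝ) - 1) := by
  have : Fact p.Prime := ⟨hp⟩
  have legendre : (p - 1) * (n !).factorization p ≤ n := by
    rw [Nat.factorization_def _ hp, sub_one_mul_padicValNat_factorial]
    exact Nat.sub_le _ _
  have hp1 : (1 : ℝ) < p := by exact_mod_cast hp.one_lt
  rw [le_div_iff₀ (by linarith), mul_comm]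
  have := (Nat.cast_le (α := ℝ)).2 legendre
  rwa [Nat.cast_mul, Nat.cast_pred hp.pos] at this

lemma div_sub_one_le_factorization_factorial (n : ℕ) {p : ℕ} (hp : p.Prime) :
    (n : ℝ) / p - 1 ≤ (n !).factorization p := by
  have hle : n / p ≤ (n !).factorization p := by
    rw [Nat.factorization_factorial hp (b := Nat.log p n + 2) (by lia)]
    simpa using single_le_sum (f := fun i ↦ n / p ^ i) (fun _ _ ↦ Nat.zero_le _)
      (show 1 ∈ Ico 1 (Nat.log p n + 2) by simp)
  have hfloor : (n : ℝ) / p < (n / p : ℕ) + 1 := by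
    rw [← Nat.floor_div_eq_div (K := ℝ)]
    exact Nat.lt_floor_add_one _
  have : ((n / p : ℕ) : ℝ) ≤ (n !).factorization p := by exact_mod_cast hle
  linarith

lemma sum_primesLE_log_div_le {n : ℕ} (hn : n ≠ 0) :
    ∑ p ∈ n.primesLE, log p / p ≤ log n + log 4 := by
  have hn0 : (0 : ℝ) < n := by exact_mod_cast Nat.pos_of_ne_zero hn
  have factorial_le : log n ! ≤ n * log n := by
    rw [← log_pow]
    exact log_le_log (by exact_mod_cast n.factorial_pos) (by exact_mod_cast n.factorial_le_pow)
  have theta_le : ∑ p ∈ n.primesLE, log p ≤ log 4 * n := by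
    simpa only [Chebyshev.theta_eq_sum_primesLE_log] using
      Chebyshev.theta_le_log4_mul_x hn0.le
  have le_factorial : ∑ p ∈ n.primesLE, ((n : ℝ) / p - 1) * log p ≤ log n ! := by
    rw [log_factorial_eq_sum_primesLE]
    gcongr with p hp
    exact div_sub_one_le_factorization_factorial n (Nat.prime_of_mem_primesLE hp)
  have expand : ∑ p ∈ n.primesLE, ((n : ℝ) / p - 1) * log p =
      n * ∑ p ∈ n.primesLE, log p / p - ∑ p ∈ n.primesLE, log p := by
    rw [mul_sum, ← sum_sub_distrib]
    exact sum_congr rfl fun p _ ↦ by ring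
  refine le_of_mul_le_mul_left ?_ hn0
  linarith

lemma log_div_sub_one_le {x : ℝ} (hx : 2 ≤ x) :
    log x / (x - 1) ≤ log x / x + 4 * (x ^ (3 / 2 : ℝ))⁻¹ := by
  have hlog : log x ≤ x ^ (1 / 2 : ℝ) / (1 / 2) := log_le_rpow_div (by linarith) (by norm_num)
  have hmul : x ^ (1 / 2 : ℝ) * x ^ (3 / 2 : ℝ) = x ^ 2 := by
    rw [← rpow_add (by linarith)]
    norm_num
  have split : log x / (x - 1) = log x / x + log x / (x * (x - 1)) := by
    have : x - 1 ≠ 0 := by linarith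
    have : x ≠ 0 := by linarith
    field_simp
    ring
  rw [split, ← div_eq_mul_inv]
  gcongr _ + ?_
  rw [div_le_div_iff₀ (by nlinarith) (by positivity)]
  calc log x * x ^ (3 / 2 : ℝ) ≤ x ^ (1 / 2 : ℝ) / (1 / 2) * x ^ (3 / 2 : ℝ) := by gcongr
    _ = 2 * x ^ 2 := by linear_combination 2 * hmul
    _ ≤ 4 * (x * (x - 1)) := by nlinarith

lemma exists_log_sub_le_sum_primesLE_log_div :
    ∃ C : ℝ, ∀ n : ℕ, n ≠ 0 → log n - C ≤ ∑ p ∈ n.primesLE, log p / p := by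
  have hsum : Summable fun n : ℕ ↦ 4 * ((n : ℝ) ^ (3 / 2 : ℝ))⁻¹ :=
    (summable_nat_rpow_inv.2 (by norm_num)).mul_left 4
  set C := ∑' n : ℕ, 4 * ((n : ℝ) ^ (3 / 2 : ℝ))⁻¹
  refine ⟨C + 1, fun n hn ↦ ?_⟩
  have hn0 : (0 : ℝ) < n := by exact_mod_cast Nat.pos_of_ne_zero hn
  have stirling : n * log n - n ≤ log n ! := by
    have h2π : 0 ≤ log (2 * π) := log_nonneg (by linarith [pi_gt_three])
    linarith [Stirling.le_log_factorial_stirling hn, log_natCast_nonneg n]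
  have legendre : log n ! ≤ n * (∑ p ∈ n.primesLE, log p / p + C) := by
    calc log n ! = ∑ p ∈ n.primesLE, ((n !).factorization p : ℝ) * log p :=
          log_factorial_eq_sum_primesLE n
      _ ≤ ∑ p ∈ n.primesLE, n * (log p / p + 4 * ((p : ℝ) ^ (3 / 2 : ℝ))⁻¹) := by
          refine sum_le_sum fun p hp ↦ ?_
          have hp := Nat.prime_of_mem_primesLE hp
          calc ((n !).factorization p : ℝ) * log p ≤ n / ((p : ℝ) - 1) * log p := by
                gcongr
                exact factorization_factorial_le_div_sub_one n hp
            _ = n * (log p / (p - 1)) := by ring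
            _ ≤ _ := by gcongr; exact log_div_sub_one_le (by exact_mod_cast hp.two_le)
      _ ≤ n * (∑ p ∈ n.primesLE, log p / p + C) := by
          rw [← mul_sum, sum_add_distrib]
          gcongr
          exact hsum.sum_le_tsum _ fun n _ ↦ by positivity
  have : log n - 1 ≤ ∑ p ∈ n.primesLE, log p / p + C :=
    le_of_mul_le_mul_left (by linarith) hn0
  linarith

theorem exists_abs_sum_primesLE_log_div_sub_log_le :
    ∃ C : ℝ, ∀ n : ℕ, n ≠ 0 → |∑ p ∈ n.primesLE, log p / p - log n| ≤ C := by
  obtain ⟨C, hC⟩ := exists_log_sub_le_sum_primesLE_log_div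
  refine ⟨max C (log 4), fun n hn ↦ abs_le.2 ⟨?_, ?_⟩⟩
  · linarith [hC n hn, le_max_left C (log 4)]
  · linarith [sum_primesLE_log_div_le hn, le_max_right C (log 4)]

/-! ### Mertens' third theorem -/

/-- The logarithm of the Euler factor `(1 - p ^ (-s))⁻¹` of the Riemann zeta function. -/
noncomputable def eulerFactorLog (s : ℝ) (p : ℕ) : ℝ := -log (1 - (p : ℝ) ^ (-s))

lemma le_neg_log_one_sub {t : ℝ} (ht : t < 1) : t ≤ -log (1 - t) := by
  linarith [log_le_sub_one_of_pos (sub_pos.2 ht)]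

lemma neg_log_one_sub_le {t : ℝ} (ht0 : 0 ≤ t) (ht : t ≤ 1 / 2) :
    -log (1 - t) ≤ t + 2 * t ^ 2 := by
  have hlog := log_le_sub_one_of_pos (show 0 < (1 - t)⁻¹ from inv_pos.2 (by linarith))
  have hinv : (1 - t)⁻¹ ≤ 1 + t + 2 * t ^ 2 := by
    rw [inv_le_iff_one_le_mul₀ (by linarith)]
    nlinarith [mul_nonneg (mul_nonneg ht0 ht0) (show 0 ≤ 1 - 2 * t by linarith)]
  rw [log_inv] at hlog
  linarith

section EulerFactor

variable {p : ℕ} {s η : ℝ}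

lemma rpow_neg_le_one_div (hp : 2 ≤ p) (hs : 1 ≤ s) : (p : ℝ) ^ (-s) ≤ 1 / p := by
  have hp1 : (1 : ℝ) ≤ p := by exact_mod_cast one_le_two.trans hp
  rw [one_div, ← rpow_neg_one]
  exact rpow_le_rpow_of_exponent_le hp1 (by linarith)

lemma rpow_neg_le_half (hp : 2 ≤ p) (hs : 1 ≤ s) : (p : ℝ) ^ (-s) ≤ 1 / 2 :=
  (rpow_neg_le_one_div hp hs).trans (by gcongr; exact_mod_cast hp)

lemma rpow_neg_le_eulerFactorLog (hp : 2 ≤ p) (hs : 1 ≤ s) :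
    (p : ℝ) ^ (-s) ≤ eulerFactorLog s p :=
  le_neg_log_one_sub (by linarith [rpow_neg_le_half hp hs])

lemma eulerFactorLog_le (hp : 2 ≤ p) (hs : 1 ≤ s) :
    eulerFactorLog s p ≤ (p : ℝ) ^ (-s) + 2 * ((p : ℝ) ^ (-s)) ^ 2 :=
  neg_log_one_sub_le (by positivity) (rpow_neg_le_half hp hs)

lemma eulerFactorLog_nonneg (hp : 2 ≤ p) (hs : 1 ≤ s) : 0 ≤ eulerFactorLog s p :=
  le_trans (by positivity) (rpow_neg_le_eulerFactorLog hp hs)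

lemma eulerFactorLog_le_two_mul (hp : 2 ≤ p) (hs : 1 ≤ s) :
    eulerFactorLog s p ≤ 2 * (p : ℝ) ^ (-s) := by
  have hpos : 0 ≤ (p : ℝ) ^ (-s) := by positivity
  nlinarith [eulerFactorLog_le hp hs, rpow_neg_le_half hp hs]

lemma rpow_neg_one_add (hp : p ≠ 0) : (p : ℝ) ^ (-(1 + η)) = 1 / p * (p : ℝ) ^ (-η) := by
  rw [neg_add, rpow_add (by positivity), rpow_neg_one, one_div]

end EulerFactor

/-- The primes `p` with `k < log p ≤ k + 1`. -/
noncomputable def primeBlock (k : ℕ) : Finset ℕ :=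
  ⌊exp ((k + 1 : ℕ) : ℝ)⌋₊.primesLE \ ⌊exp (k : ℝ)⌋₊.primesLE

lemma mem_primeBlock {k p : ℕ} :
    p ∈ primeBlock k ↔ p.Prime ∧ (k : ℝ) < log p ∧ log p ≤ k + 1 := by
  rcases Nat.eq_zero_or_pos p with rfl | hp
  · simp [primeBlock, Nat.mem_primesLE, Nat.not_prime_zero]
  have hp0 : (0 : ℝ) < p := by exact_mod_cast hp
  rw [primeBlock, Finset.mem_sdiff, Nat.mem_primesLE, Nat.mem_primesLE,
    Nat.le_floor_iff (exp_pos _).le, Nat.le_floor_iff (exp_pos _).le, ← log_le_iff_le_exp hp0,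
    ← log_le_iff_le_exp hp0]
  push_cast
  grind

lemma sum_primeBlock (f : ℕ → ℝ) (k : ℕ) :
    ∑ p ∈ primeBlock k, f p =
      ∑ p ∈ ⌊exp ((k + 1 : ℕ) : ℝ)⌋₊.primesLE, f p - ∑ p ∈ ⌊exp (k : ℝ)⌋₊.primesLE, f p := by
  rw [primeBlock, eq_sub_iff_add_eq]
  exact sum_sdiff (Nat.primesLE_mono (Nat.floor_mono (by gcongr; simp)))

lemma sum_range_sum_primeBlock (f : ℕ → ℝ) (K : ℕ) :
    ∑ k ∈ range K, ∑ p ∈ primeBlock k, f p = ∑ p ∈ ⌊exp (K : ℝ)⌋₊.primesLE, f p := by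
  simp_rw [sum_primeBlock]
  rw [sum_range_sub fun k : ℕ ↦ ∑ p ∈ ⌊exp (k : ℝ)⌋₊.primesLE, f p]
  simp

lemma exists_abs_sum_floor_exp_log_div_sub_le :
    ∃ C : ℝ, ∀ k : ℕ, |∑ p ∈ ⌊exp (k : ℝ)⌋₊.primesLE, log p / p - k| ≤ C := by
  obtain ⟨C, hC⟩ := exists_abs_sum_primesLE_log_div_sub_log_le
  refine ⟨C + 1, fun k ↦ ?_⟩
  have hfloor : 1 ≤ ⌊exp (k : ℝ)⌋₊ := (Nat.one_le_floor_iff _).2 (one_le_exp k.cast_nonneg)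
  have hfloor' : (1 : ℝ) ≤ ⌊exp (k : ℝ)⌋₊ := by exact_mod_cast hfloor
  have log_floor_le : log ⌊exp (k : ℝ)⌋₊ ≤ k :=
    (log_le_iff_le_exp (by linarith)).2 (Nat.floor_le (exp_pos _).le)
  have le_log_floor : k - 1 ≤ log ⌊exp (k : ℝ)⌋₊ := by
    rw [le_log_iff_exp_le (by linarith)]
    have : exp (k - 1 : ℝ) * 2 ≤ exp k := by
      calc exp (k - 1 : ℝ) * 2 ≤ exp (k - 1) * exp 1 := by
            gcongr; linarith [add_one_le_exp (1 : ℝ)]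
        _ = exp k := by rw [← exp_add]; ring_nf
    linarith [Nat.lt_floor_add_one (exp (k : ℝ))]
  have := abs_le.1 (hC ⌊exp (k : ℝ)⌋₊ (by lia))
  exact abs_le.2 ⟨by linarith, by linarith⟩

lemma exists_sum_primeBlock_log_div_le : ∃ C : ℝ, ∀ k, ∑ p ∈ primeBlock k, log p / p ≤ C := by
  obtain ⟨C, hC⟩ := exists_abs_sum_floor_exp_log_div_sub_le
  refine ⟨2 * C + 1, fun k ↦ ?_⟩
  have hk := abs_le.1 (hC k)
  have hk1 := abs_le.1 (hC (k + 1))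
  rw [sum_primeBlock]
  push_cast at hk1 ⊢
  linarith [hk.1, hk1.2]

section BlockError

variable {k p : ℕ}

lemma log_div_mul_le_eulerFactorLog_one (hp : p ∈ primeBlock k) :
    1 / ((k : ℝ) + 1) * (log p / p) ≤ eulerFactorLog 1 p := by
  obtain ⟨hprime, -, hle⟩ := mem_primeBlock.1 hp
  have hp0 : (0 : ℝ) < p := by exact_mod_cast hprime.pos
  have hlow := rpow_neg_le_eulerFactorLog hprime.two_le le_rfl
  rw [rpow_neg_one, ← one_div] at hlow
  calc 1 / ((k : ℝ) + 1) * (log p / p) = log p / (k + 1) * (1 / p) := by ring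
    _ ≤ 1 * (1 / p) := by gcongr; exact (div_le_one (by positivity)).2 hle
    _ ≤ eulerFactorLog 1 p := by rwa [one_mul]

lemma add_one_div_three_le_log (hp : p ∈ primeBlock k) : ((k : ℝ) + 1) / 3 ≤ log p := by
  obtain ⟨hprime, hlt, -⟩ := mem_primeBlock.1 hp
  rcases Nat.eq_zero_or_pos k with rfl | hk
  · have : log 2 ≤ log p := log_le_log (by norm_num) (by exact_mod_cast hprime.two_le)
    norm_num
    linarith [log_two_gt_d9]
  · have : (1 : ℝ) ≤ k := by exact_mod_cast hk
    linarith

lemma eulerFactorLog_one_sub_le (hp : p ∈ primeBlock k) :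
    eulerFactorLog 1 p - 1 / ((k : ℝ) + 1) * (log p / p) ≤
      2 * (1 / (p : ℝ)) ^ 2 + 3 * (1 / ((k : ℝ) + 1) ^ 2) * (log p / p) := by
  obtain ⟨hprime, hlt, -⟩ := mem_primeBlock.1 hp
  have hp0 : (0 : ℝ) < p := by exact_mod_cast hprime.pos
  have hk : (0 : ℝ) < (k : ℝ) + 1 := by positivity
  have hup := eulerFactorLog_le hprime.two_le le_rfl
  rw [rpow_neg_one, ← one_div] at hup
  have hgap : 1 - log p / ((k : ℝ) + 1) ≤ 3 * log p / (k + 1) ^ 2 := by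
    calc 1 - log p / ((k : ℝ) + 1) = (k + 1 - log p) / (k + 1) := one_sub_div hk.ne'
      _ ≤ 1 / (k + 1) := by gcongr; linarith
      _ ≤ 3 * log p / (k + 1) ^ 2 := by
        rw [div_le_div_iff₀ hk (by positivity)]
        nlinarith [add_one_div_three_le_log hp]
  calc eulerFactorLog 1 p - 1 / ((k : ℝ) + 1) * (log p / p)
      ≤ 2 * (1 / (p : ℝ)) ^ 2 + 1 / p * (1 - log p / (k + 1)) := by
        linear_combination hup
    _ ≤ 2 * (1 / (p : ℝ)) ^ 2 + 1 / p * (3 * log p / (k + 1) ^ 2) := by gcongr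
    _ = _ := by ring

end BlockError

lemma summable_two_mul_one_div_sq : Summable fun n : ℕ ↦ 2 * (1 / (n : ℝ)) ^ 2 := by
  simpa [one_div_pow] using (summable_one_div_nat_pow.2 one_lt_two).mul_left 2

lemma summable_sum_primeBlock_eulerFactorLog_sub :
    Summable fun k : ℕ ↦
      ∑ p ∈ primeBlock k, (eulerFactorLog 1 p - 1 / ((k : ℝ) + 1) * (log p / p)) := by
  obtain ⟨C, hC⟩ := exists_sum_primeBlock_log_div_le
  have hC0 : 0 ≤ C := le_trans (sum_nonneg fun p _ ↦ by positivity) (hC 0)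
  have hsum : Summable fun k : ℕ ↦ 3 * (1 / ((k : ℝ) + 1) ^ 2) * C := by
    have := (summable_nat_add_iff 1).2 (summable_one_div_nat_pow.2 one_lt_two)
    simpa using (this.mul_left 3).mul_right C
  refine summable_of_sum_range_le
    (c := ∑' n : ℕ, 2 * (1 / (n : ℝ)) ^ 2 + ∑' k : ℕ, 3 * (1 / ((k : ℝ) + 1) ^ 2) * C)
    (fun k ↦ sum_nonneg fun p hp ↦ sub_nonneg.2 (log_div_mul_le_eulerFactorLog_one hp))
    fun K ↦ ?_
  calc _ ≤ ∑ k ∈ range K, (∑ p ∈ primeBlock k, 2 * (1 / (p : ℝ)) ^ 2 +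
        3 * (1 / ((k : ℝ) + 1) ^ 2) * C) := by
        refine sum_le_sum fun k _ ↦ (sum_le_sum fun p hp ↦ eulerFactorLog_one_sub_le hp).trans ?_
        rw [sum_add_distrib, ← mul_sum (f := fun p : ℕ ↦ log p / p)]
        gcongr
        exact hC k
    _ ≤ _ := by
        rw [sum_add_distrib, sum_range_sum_primeBlock fun p ↦ 2 * (1 / (p : ℝ)) ^ 2]
        exact add_le_add
          (summable_two_mul_one_div_sq.sum_le_tsum _ fun n _ ↦ by positivity)
          (hsum.sum_le_tsum _ fun n _ ↦ by positivity)

-- Dirichlet's test applies because the partial sums of `∑ log p / p - 1` over blocks are bounded,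
-- by Mertens' first theorem.
lemma exists_tendsto_sum_primeBlock_eulerFactorLog_sub :
    ∃ β : ℝ, Tendsto (fun K : ℕ ↦ ∑ k ∈ range K,
      (∑ p ∈ primeBlock k, eulerFactorLog 1 p - 1 / ((k : ℝ) + 1))) atTop (𝓝 β) := by
  obtain ⟨C, hC⟩ := exists_abs_sum_floor_exp_log_div_sub_le
  have hbdd (K : ℕ) : ‖∑ k ∈ range K, (∑ p ∈ primeBlock k, log p / p - 1)‖ ≤ C := by
    rw [sum_sub_distrib, sum_range_sum_primeBlock]
    simpa using hC K
  have hanti : Antitone fun k : ℕ ↦ 1 / ((k : ℝ) + 1) := fun a b hab ↦ by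
    dsimp only
    gcongr
  obtain ⟨β, hβ⟩ := cauchySeq_tendsto_of_complete <|
    hanti.cauchySeq_series_mul_of_tendsto_zero_of_bounded
      tendsto_one_div_add_atTop_nhds_zero_nat hbdd
  refine ⟨_, (summable_sum_primeBlock_eulerFactorLog_sub.hasSum.tendsto_sum_nat.add
    hβ).congr fun K ↦ ?_⟩
  rw [← sum_add_distrib]
  refine sum_congr rfl fun k _ ↦ ?_
  simp only [sum_sub_distrib, smul_eq_mul, ← mul_sum]
  ring

lemma tendsto_sum_primesLE_of_hasSum {f : ℕ → ℝ} {a : ℝ}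
    (h : HasSum (fun p : Nat.Primes ↦ f p) a) :
    Tendsto (fun n : ℕ ↦ ∑ p ∈ n.primesLE, f p) atTop (𝓝 a) := by
  have h' : HasSum ({p : ℕ | p.Prime}.indicator f) a := hasSum_subtype_iff_indicator.1 h
  refine (h'.tendsto_sum_nat.comp (tendsto_add_atTop_nat 1)).congr fun n ↦ ?_
  simp [Nat.primesLE_eq_filter_range, sum_filter, Set.indicator_apply]

lemma summable_primes_rpow_neg {s : ℝ} (hs : 1 < s) :
    Summable fun p : Nat.Primes ↦ (p : ℝ) ^ (-s) :=
  Nat.Primes.summable_rpow.2 (by linarith)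

lemma summable_eulerFactorLog {s : ℝ} (hs : 1 < s) :
    Summable fun p : Nat.Primes ↦ eulerFactorLog s p :=
  .of_nonneg_of_le (fun p ↦ eulerFactorLog_nonneg p.2.two_le hs.le)
    (fun p ↦ eulerFactorLog_le_two_mul p.2.two_le hs.le)
    ((summable_primes_rpow_neg hs).mul_left 2)

lemma log_riemannZeta_re {s : ℝ} (hs : 1 < s) :
    log (riemannZeta s).re = ∑' p : Nat.Primes, eulerFactorLog s p := by
  have ofReal (p : Nat.Primes) :
      -Complex.log (1 - (p : ℂ) ^ (-(s : ℂ))) = (eulerFactorLog s p : ℂ) := by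
    have hlt : (p : ℝ) ^ (-s) ≤ 1 / 2 := rpow_neg_le_half p.2.two_le hs.le
    rw [eulerFactorLog, Complex.ofReal_neg, Complex.ofReal_log (by linarith), Complex.ofReal_sub,
      Complex.ofReal_cpow (by positivity)]
    simp
  have euler := riemannZeta_eulerProduct_exp_log (s := s) (by simpa using hs)
  rw [tsum_congr ofReal, ← Complex.ofReal_tsum, ← Complex.ofReal_exp] at euler
  rw [← euler, Complex.ofReal_re, log_exp]

lemma tendsto_tsum_eulerFactorLog_add_log :
    Tendsto (fun η : ℝ ↦ ∑' p : Nat.Primes, eulerFactorLog (1 + η) p + log η) (𝓝[>] 0) (𝓝 0) := by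
  have hshift : Tendsto (fun η : ℝ ↦ 1 + η) (𝓝[>] 0) (𝓝[>] 1) := by
    refine tendsto_nhdsWithin_of_tendsto_nhds_of_eventually_within _ ?_ ?_
    · simpa using (continuous_const_add (1 : ℝ)).tendsto' 0 _ rfl |>.mono_left nhdsWithin_le_nhds
    · filter_upwards [self_mem_nhdsWithin] with η hη using by simpa using hη
  refine ((isLittleO_one_iff ℝ).1
    (log_riemannZeta_add_log_sub_isLittleO_ofReal.comp_tendsto hshift)).congr' ?_
  filter_upwards [self_mem_nhdsWithin] with η (hη : 0 < η)
  simp only [Function.comp, add_sub_cancel_left]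
  rw [log_riemannZeta_re (by linarith)]

/-- The weight of `p` in the power series `∑ k, (∑ p ∈ primeBlock k, -log (1 - 1 / p)) x ^ (k + 1)`
at `x = exp (-η)`; here `⌈log p⌉₊ = k + 1` for `p ∈ primeBlock k`. -/
noncomputable def blockWeight (η : ℝ) (p : ℕ) : ℝ :=
  eulerFactorLog 1 p * exp (-η) ^ ⌈log p⌉₊

section BlockWeight

variable {p : ℕ} {η : ℝ}

lemma exp_neg_pow_ceil_log_le (hp : p ≠ 0) (hη : 0 ≤ η) :
    exp (-η) ^ ⌈log p⌉₊ ≤ (p : ℝ) ^ (-η) := by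
  rw [← exp_nat_mul, rpow_def_of_pos (by positivity)]
  gcongr exp ?_
  nlinarith [Nat.le_ceil (log p)]

lemma rpow_neg_mul_one_sub_le (hp : p ≠ 0) (hη : 0 ≤ η) :
    (p : ℝ) ^ (-η) * (1 - η) ≤ exp (-η) ^ ⌈log p⌉₊ := by
  calc (p : ℝ) ^ (-η) * (1 - η) ≤ (p : ℝ) ^ (-η) * exp (-η) := by
        gcongr
        linarith [add_one_le_exp (-η)]
    _ ≤ exp (-η) ^ ⌈log p⌉₊ := by
        rw [← exp_nat_mul, rpow_def_of_pos (by positivity), ← exp_add]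
        gcongr exp ?_
        nlinarith [Nat.ceil_lt_add_one (log_natCast_nonneg p)]

lemma eulerFactorLog_one_mul_rpow_neg_le (hp : 2 ≤ p) :
    eulerFactorLog 1 p * (p : ℝ) ^ (-η) ≤ 2 * (p : ℝ) ^ (-(1 + η)) := by
  have hle := eulerFactorLog_le_two_mul hp le_rfl
  rw [rpow_neg_one, ← one_div] at hle
  rw [rpow_neg_one_add (by lia), ← mul_assoc]
  gcongr

lemma blockWeight_nonneg (hp : 2 ≤ p) : 0 ≤ blockWeight η p :=
  mul_nonneg (eulerFactorLog_nonneg hp le_rfl) (by positivity)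

lemma blockWeight_le (hp : 2 ≤ p) (hη : 0 ≤ η) :
    blockWeight η p ≤ eulerFactorLog 1 p * (p : ℝ) ^ (-η) :=
  mul_le_mul_of_nonneg_left (exp_neg_pow_ceil_log_le (by lia) hη)
    (eulerFactorLog_nonneg hp le_rfl)

lemma eulerFactorLog_one_mul_sub_blockWeight_le (hp : 2 ≤ p) (hη : 0 ≤ η) :
    eulerFactorLog 1 p * (p : ℝ) ^ (-η) - blockWeight η p ≤
      2 * (η * eulerFactorLog (1 + η) p) := by
  have hlow := mul_le_mul_of_nonneg_left (rpow_neg_mul_one_sub_le (by lia : p ≠ 0) hη)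
    (eulerFactorLog_nonneg hp le_rfl)
  have hzeta := rpow_neg_le_eulerFactorLog hp (by linarith : 1 ≤ 1 + η)
  unfold blockWeight
  nlinarith [eulerFactorLog_one_mul_rpow_neg_le (η := η) hp]

lemma summable_eulerFactorLog_one_mul_rpow_neg (hη : 0 < η) :
    Summable fun p : Nat.Primes ↦ eulerFactorLog 1 p * (p : ℝ) ^ (-η) :=
  .of_nonneg_of_le
    (fun p ↦ mul_nonneg (eulerFactorLog_nonneg p.2.two_le le_rfl) (by positivity))
    (fun p ↦ eulerFactorLog_one_mul_rpow_neg_le p.2.two_le)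
    ((summable_primes_rpow_neg (by linarith : 1 < 1 + η)).mul_left 2)

lemma summable_blockWeight (hη : 0 < η) : Summable fun p : Nat.Primes ↦ blockWeight η p :=
  .of_nonneg_of_le (fun p ↦ blockWeight_nonneg p.2.two_le)
    (fun p ↦ blockWeight_le p.2.two_le hη.le) (summable_eulerFactorLog_one_mul_rpow_neg hη)

lemma abs_eulerFactorLog_one_mul_sub_le (hp : 2 ≤ p) (hη : 0 ≤ η) :
    |eulerFactorLog 1 p * (p : ℝ) ^ (-η) - eulerFactorLog (1 + η) p| ≤ 2 * (1 / (p : ℝ)) ^ 2 := by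
  have h1η : 1 ≤ 1 + η := by linarith
  have hz1 : (p : ℝ) ^ (-η) ≤ 1 :=
    rpow_le_one_of_one_le_of_nonpos (by exact_mod_cast one_le_two.trans hp) (by linarith)
  have hsq : ((p : ℝ) ^ (-(1 + η))) ^ 2 ≤ (1 / (p : ℝ)) ^ 2 := by
    gcongr
    exact rpow_neg_le_one_div hp h1η
  have hlow := rpow_neg_le_eulerFactorLog hp le_rfl
  have hup := eulerFactorLog_le hp le_rfl
  rw [rpow_neg_one, ← one_div] at hlow hup
  have hlow' := rpow_neg_le_eulerFactorLog hp h1η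
  have hup' := eulerFactorLog_le hp h1η
  have hfactor := rpow_neg_one_add (η := η) (by lia : p ≠ 0)
  have hz0 : 0 ≤ (p : ℝ) ^ (-η) := by positivity
  rw [abs_le]
  constructor
  · nlinarith
  · have : (eulerFactorLog 1 p - 1 / p) * (p : ℝ) ^ (-η) ≤ 2 * (1 / (p : ℝ)) ^ 2 * 1 := by
      gcongr
      linarith
    nlinarith

end BlockWeight

lemma tendsto_eulerFactorLog_one_mul_sub (p : Nat.Primes) :
    Tendsto (fun η : ℝ ↦ eulerFactorLog 1 p * (p : ℝ) ^ (-η) - eulerFactorLog (1 + η) p)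
      (𝓝[>] 0) (𝓝 0) := by
  have hp : (p : ℝ) ≠ 0 := by exact_mod_cast p.2.ne_zero
  have hlt : (p : ℝ) ^ (-(1 + 0 : ℝ)) ≤ 1 / 2 := rpow_neg_le_half p.2.two_le (by simp)
  have hcont : ContinuousAt (fun η : ℝ ↦
      eulerFactorLog 1 p * (p : ℝ) ^ (-η) - -log (1 - (p : ℝ) ^ (-(1 + η)))) 0 := by
    refine ContinuousAt.sub ?_ (ContinuousAt.neg (ContinuousAt.log ?_ ?_))
    · exact continuousAt_const.mul
        (continuousAt_const.rpow continuousAt_neg (.inl hp))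
    · exact continuousAt_const.sub (continuousAt_const.rpow (by fun_prop) (.inl hp))
    · exact (sub_pos.2 (hlt.trans_lt (by norm_num))).ne'
  have := hcont.tendsto.mono_left (nhdsWithin_le_nhds (s := Set.Ioi 0))
  simpa [eulerFactorLog] using this

lemma tendsto_tsum_eulerFactorLog_one_mul_sub :
    Tendsto (fun η : ℝ ↦ ∑' p : Nat.Primes,
      (eulerFactorLog 1 p * (p : ℝ) ^ (-η) - eulerFactorLog (1 + η) p)) (𝓝[>] 0) (𝓝 0) := by
  have hdom : Summable fun p : Nat.Primes ↦ 2 * (1 / (p : ℝ)) ^ 2 :=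
    summable_two_mul_one_div_sq.comp_injective Subtype.val_injective
  simpa using tendsto_tsum_of_dominated_convergence hdom tendsto_eulerFactorLog_one_mul_sub
    (by filter_upwards [self_mem_nhdsWithin] with η (hη : 0 < η) p using
      abs_eulerFactorLog_one_mul_sub_le p.2.two_le hη.le)

lemma tendsto_tsum_eulerFactorLog_one_mul_sub_blockWeight :
    Tendsto (fun η : ℝ ↦ ∑' p : Nat.Primes,
      (eulerFactorLog 1 p * (p : ℝ) ^ (-η) - blockWeight η p)) (𝓝[>] 0) (𝓝 0) := by
  have hlogmul : Tendsto (fun η : ℝ ↦ log η * η) (𝓝[>] 0) (𝓝 0) := by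
    simpa using tendsto_log_mul_rpow_nhdsGT_zero (r := 1) one_pos
  have hid : Tendsto (fun η : ℝ ↦ η) (𝓝[>] 0) (𝓝 0) := nhdsWithin_le_nhds
  have hbound : Tendsto (fun η : ℝ ↦ 2 * (η * ∑' p : Nat.Primes, eulerFactorLog (1 + η) p))
      (𝓝[>] 0) (𝓝 0) := by
    have := ((hid.mul tendsto_tsum_eulerFactorLog_add_log).sub hlogmul).const_mul 2
    simp only [mul_zero, sub_zero] at this
    exact this.congr fun η ↦ by ring
  refine tendsto_of_tendsto_of_tendsto_of_le_of_le' tendsto_const_nhds hbound ?_ ?_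
  all_goals filter_upwards [self_mem_nhdsWithin] with η (hη : 0 < η)
  · exact tsum_nonneg fun p ↦ sub_nonneg.2 (blockWeight_le p.2.two_le hη.le)
  · rw [← tsum_mul_left, ← tsum_mul_left]
    exact ((summable_eulerFactorLog_one_mul_rpow_neg hη).sub (summable_blockWeight hη)).tsum_le_tsum
      (fun p ↦ eulerFactorLog_one_mul_sub_blockWeight_le p.2.two_le hη.le)
      (((summable_eulerFactorLog (by linarith)).mul_left η).mul_left 2)

lemma tendsto_tsum_blockWeight_sub_tsum_eulerFactorLog :
    Tendsto (fun η : ℝ ↦ ∑' p : Nat.Primes, blockWeight η p -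
      ∑' p : Nat.Primes, eulerFactorLog (1 + η) p) (𝓝[>] 0) (𝓝 0) := by
  have := tendsto_tsum_eulerFactorLog_one_mul_sub.sub
    tendsto_tsum_eulerFactorLog_one_mul_sub_blockWeight
  rw [sub_zero] at this
  refine this.congr' ?_
  filter_upwards [self_mem_nhdsWithin] with η (hη : 0 < η)
  have hmid := summable_eulerFactorLog_one_mul_rpow_neg hη
  rw [hmid.tsum_sub (summable_eulerFactorLog (by linarith)),
    hmid.tsum_sub (summable_blockWeight hη)]
  ring

lemma hasSum_sum_primeBlock_mul_exp_neg_pow {η : ℝ} (hη : 0 < η) :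
    HasSum (fun k : ℕ ↦ (∑ p ∈ primeBlock k, eulerFactorLog 1 p) * exp (-η) ^ (k + 1))
      (∑' p : Nat.Primes, blockWeight η p) := by
  have hfloor : Tendsto (fun k : ℕ ↦ ⌊exp (k : ℝ)⌋₊) atTop atTop :=
    tendsto_nat_floor_atTop.comp (tendsto_exp_atTop.comp tendsto_natCast_atTop_atTop)
  rw [hasSum_iff_tendsto_nat_of_nonneg fun k ↦ mul_nonneg
    (sum_nonneg fun p hp ↦ eulerFactorLog_nonneg (mem_primeBlock.1 hp).1.two_le le_rfl)
    (by positivity)]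
  refine ((tendsto_sum_primesLE_of_hasSum (summable_blockWeight hη).hasSum).comp hfloor).congr
    fun K ↦ ?_
  rw [Function.comp_apply, ← sum_range_sum_primeBlock]
  refine sum_congr rfl fun k _ ↦ ?_
  rw [sum_mul]
  refine sum_congr rfl fun p hp ↦ ?_
  obtain ⟨-, hlt, hle⟩ := mem_primeBlock.1 hp
  rw [blockWeight, (Nat.ceil_eq_iff k.succ_ne_zero).2 ⟨by simpa using hlt, by exact_mod_cast hle⟩]

lemma tendsto_log_one_sub_exp_neg_sub_log :
    Tendsto (fun η : ℝ ↦ log (1 - exp (-η)) - log η) (𝓝[>] 0) (𝓝 0) := by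
  have hderiv : HasDerivAt (fun η : ℝ ↦ -exp (-η)) 1 0 := by
    simpa using ((hasDerivAt_neg (0 : ℝ)).exp).fun_neg
  have hlim := (continuousAt_log one_ne_zero).tendsto.comp hderiv.tendsto_slope_zero_right
  rw [log_one] at hlim
  refine hlim.congr' ?_
  filter_upwards [self_mem_nhdsWithin] with η (hη : 0 < η)
  have hexp : exp (-η) < 1 := by simpa using hη
  simp only [Function.comp, zero_add, neg_zero, exp_zero, smul_eq_mul]
  rw [show -exp (-η) - -1 = 1 - exp (-η) by ring, log_mul (by positivity) (by linarith), log_inv]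
  ring

-- Abel's limit theorem identifies the limit with that of the power series, which is compared
-- with `log ζ(1 + η)` as `η → 0+`.
lemma tendsto_sum_primeBlock_eulerFactorLog_sub :
    Tendsto (fun K : ℕ ↦ ∑ k ∈ range K,
      (∑ p ∈ primeBlock k, eulerFactorLog 1 p - 1 / ((k : ℝ) + 1))) atTop (𝓝 0) := by
  obtain ⟨β, hβ⟩ := exists_tendsto_sum_primeBlock_eulerFactorLog_sub
  have hexp : Tendsto (fun η : ℝ ↦ exp (-η)) (𝓝[>] 0) (𝓝[<] 1) := by
    refine tendsto_nhdsWithin_of_tendsto_nhds_of_eventually_within _ ?_ ?_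
    · exact ((continuous_exp.comp continuous_neg).tendsto' (0 : ℝ) 1 (by simp)).mono_left
        nhdsWithin_le_nhds
    · filter_upwards [self_mem_nhdsWithin] with η hη using by simpa using hη
  have habel := (hexp.mono_right nhdsWithin_le_nhds).mul
    ((tendsto_tsum_powerSeries_nhdsWithin_lt hβ).comp hexp)
  have hzeta := (tendsto_tsum_blockWeight_sub_tsum_eulerFactorLog.add
    tendsto_tsum_eulerFactorLog_add_log).add tendsto_log_one_sub_exp_neg_sub_log
  rw [one_mul] at habel
  simp only [add_zero] at hzeta
  suffices β = 0 by rwa [this] at hβ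
  refine tendsto_nhds_unique (habel.congr' ?_) hzeta
  filter_upwards [self_mem_nhdsWithin] with η (hη : 0 < η)
  have hlog := hasSum_pow_div_log_of_abs_lt_one (x := exp (-η)) (by simpa using hη)
  calc exp (-η) * ∑' k : ℕ, (∑ p ∈ primeBlock k, eulerFactorLog 1 p - 1 / ((k : ℝ) + 1)) *
        exp (-η) ^ k
      = ∑' k : ℕ, ((∑ p ∈ primeBlock k, eulerFactorLog 1 p) * exp (-η) ^ (k + 1) -
          exp (-η) ^ (k + 1) / (k + 1)) := by
        rw [← tsum_mul_left]
        exact tsum_congr fun k ↦ by ring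
    _ = ∑' p : Nat.Primes, blockWeight η p - -log (1 - exp (-η)) :=
        ((hasSum_sum_primeBlock_mul_exp_neg_pow hη).sub hlog).tsum_eq
    _ = _ := by ring

lemma tendsto_sum_floor_exp_eulerFactorLog_sub_log :
    Tendsto (fun k : ℕ ↦ ∑ p ∈ ⌊exp (k : ℝ)⌋₊.primesLE, eulerFactorLog 1 p - log k) atTop
      (𝓝 eulerMascheroniConstant) := by
  have := tendsto_sum_primeBlock_eulerFactorLog_sub.add tendsto_harmonic_sub_log
  rw [zero_add] at this
  refine this.congr fun K ↦ ?_
  rw [sum_sub_distrib, sum_range_sum_primeBlock]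
  simp [harmonic]

lemma sum_primesLE_eulerFactorLog_mono :
    Monotone fun n : ℕ ↦ ∑ p ∈ n.primesLE, eulerFactorLog 1 p :=
  fun _ _ hab ↦ sum_le_sum_of_subset_of_nonneg (Nat.primesLE_mono hab) fun _ hp _ ↦
    eulerFactorLog_nonneg (Nat.prime_of_mem_primesLE hp).two_le le_rfl

lemma tendsto_sum_primesLE_eulerFactorLog_sub_log_log :
    Tendsto (fun y : ℝ ↦ ∑ p ∈ ⌊y⌋₊.primesLE, eulerFactorLog 1 p - log (log y)) atTop
      (𝓝 eulerMascheroniConstant) := by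
  have hfloor : Tendsto (fun y : ℝ ↦ ⌊log y⌋₊) atTop atTop :=
    tendsto_nat_floor_atTop.comp tendsto_log_atTop
  have hlow := (tendsto_sum_floor_exp_eulerFactorLog_sub_log.sub
    tendsto_log_nat_add_one_sub_log).comp hfloor
  have hup := ((tendsto_sum_floor_exp_eulerFactorLog_sub_log.comp (tendsto_add_atTop_nat 1)).add
    tendsto_log_nat_add_one_sub_log).comp hfloor
  rw [sub_zero] at hlow
  rw [add_zero] at hup
  refine tendsto_of_tendsto_of_tendsto_of_le_of_le' hlow hup ?_ ?_
  all_goals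
    filter_upwards [eventually_ge_atTop (exp 1)] with y hy
    have hy0 : 0 < y := (exp_pos 1).trans_le hy
    have hlog : 1 ≤ log y := (le_log_iff_exp_le hy0).2 hy
    have floor_pos : (0 : ℝ) < ⌊log y⌋₊ := by exact_mod_cast Nat.floor_pos.2 hlog
    have floor_le : (⌊log y⌋₊ : ℝ) ≤ log y := Nat.floor_le (by linarith)
    have lt_floor : log y < ⌊log y⌋₊ + 1 := Nat.lt_floor_add_one _
    have := log_le_log floor_pos floor_le
    have := log_le_log (by linarith) lt_floor.le
    simp only [Function.comp]
  · have hle : ⌊exp (⌊log y⌋₊ : ℝ)⌋₊ ≤ ⌊y⌋₊ :=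
      Nat.floor_mono ((le_log_iff_exp_le hy0).1 floor_le)
    linarith [sum_primesLE_eulerFactorLog_mono hle]
  · have hle : ⌊y⌋₊ ≤ ⌊exp ((⌊log y⌋₊ + 1 : ℕ) : ℝ)⌋₊ :=
      Nat.floor_mono ((log_le_iff_le_exp hy0).1 (by push_cast; exact lt_floor.le))
    have := sum_primesLE_eulerFactorLog_mono hle
    push_cast at this ⊢
    linarith

theorem tendsto_prod_primesLE_one_sub_mul_log :
    Tendsto (fun y : ℝ ↦ (∏ p ∈ ⌊y⌋₊.primesLE, (1 - 1 / (p : ℝ))) * log y) atTop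
      (𝓝 (exp (-eulerMascheroniConstant))) := by
  refine ((continuous_exp.tendsto _).comp
    tendsto_sum_primesLE_eulerFactorLog_sub_log_log.neg).congr' ?_
  filter_upwards [eventually_gt_atTop 1] with y hy
  have hprod : exp (-∑ p ∈ ⌊y⌋₊.primesLE, eulerFactorLog 1 p) =
      ∏ p ∈ ⌊y⌋₊.primesLE, (1 - 1 / (p : ℝ)) := by
    rw [← sum_neg_distrib, exp_sum]
    refine prod_congr rfl fun p hp ↦ ?_
    have hlt := rpow_neg_le_half (Nat.prime_of_mem_primesLE hp).two_le le_rfl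
    rw [eulerFactorLog, neg_neg, exp_log (by linarith), rpow_neg_one, one_div]
  rw [Function.comp_apply, neg_sub, sub_eq_neg_add, exp_add, exp_log (log_pos hy), hprod]

/-! ### The sieve of Eratosthenes–Legendre -/

lemma totient_mul_le_card_filter_coprime (a k : ℕ) :
    φ a * k ≤ #{n ∈ Ico 1 (1 + a * k) | a.Coprime n} := by
  induction k with
  | zero => simp
  | succ k ih =>
    have hsplit : Ico 1 (1 + a * (k + 1)) =
        Ico 1 (1 + a * k) ∪ Ico (1 + a * k) (1 + a * k + a) := by
      rw [Ico_union_Ico_eq_Ico (by lia) (by lia)]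
      congr 1
      ring
    rw [hsplit, filter_union, card_union_of_disjoint
      (disjoint_filter_filter (Ico_disjoint_Ico_consecutive _ _ _)),
      Nat.filter_coprime_Ico_eq_totient, mul_add_one]
    lia

lemma abs_card_filter_coprime_sub_le {a : ℕ} (ha : 0 < a) (N : ℕ) :
    |(#{n ∈ Ioc 0 N | a.Coprime n} : ℝ) - N * (φ a / a)| ≤ a := by
  have hIoc : Ioc 0 N = Ico 1 (1 + N) := by
    rw [add_comm]
    exact (Ico_add_one_add_one_eq_Ioc 0 N).symm
  have hφ : (φ a : ℝ) ≤ a := by exact_mod_cast Nat.totient_le a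
  have hupper : (#{n ∈ Ioc 0 N | a.Coprime n} : ℝ) ≤ φ a * ((N / a : ℕ) + 1) := by
    rw [hIoc]
    exact_mod_cast Nat.Ico_filter_coprime_le 1 N ha.ne'
  have hlower : (φ a : ℝ) * (N / a : ℕ) ≤ #{n ∈ Ioc 0 N | a.Coprime n} := by
    rw [hIoc]
    exact_mod_cast (totient_mul_le_card_filter_coprime a (N / a)).trans <| card_le_card <|
      filter_subset_filter _ <| Ico_subset_Ico_right <| by grind [Nat.mul_div_le N a]
  have hdiv_le : ((N / a : ℕ) : ℝ) ≤ N / a := Nat.cast_div_le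
  have hdiv_gt : (N / a : ℝ) < (N / a : ℕ) + 1 := by
    rw [← Nat.floor_div_eq_div (K := ℝ)]
    exact Nat.lt_floor_add_one _
  rw [abs_le]
  constructor
  · calc -(a : ℝ) ≤ -φ a := neg_le_neg hφ
      _ = φ a * (N / a - 1) - N * (φ a / a) := by ring
      _ ≤ φ a * (N / a : ℕ) - N * (φ a / a) := by gcongr; linarith
      _ ≤ _ := by gcongr
  · calc _ ≤ φ a * ((N / a : ℕ) + 1) - N * (φ a / a : ℝ) := by gcongr
      _ ≤ φ a * (N / a + 1) - N * (φ a / a : ℝ) := by gcongr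
      _ = φ a := by ring
      _ ≤ a := hφ

lemma totient_primorial_div_primorial (y : ℕ) :
    (φ (primorial y) / primorial y : ℝ) = ∏ p ∈ y.primesLE, (1 - 1 / (p : ℝ)) := by
  have htotient := congrArg (Rat.cast : ℚ → ℝ) (Nat.totient_eq_mul_prod_factors (primorial y))
  push_cast at htotient
  rw [htotient, primeFactors_primorial,
    mul_div_cancel_left₀ _ (by exact_mod_cast primorial_ne_zero y)]
  simp only [one_div]

/-- The number of positive integers `n ≤ N` none of whose prime factors is at most `y`. -/
def roughCount (N y : ℕ) : ℕ := #{n ∈ Ioc 0 N | (primorial y).Coprime n}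

lemma coprime_primorial_iff {y n : ℕ} :
    (primorial y).Coprime n ↔ ∀ p ∈ y.primesLE, ¬ p ∣ n := by
  rw [primorial_eq_prod_primesLE, Nat.coprime_prod_left_iff]
  exact forall₂_congr fun p hp ↦ (Nat.prime_of_mem_primesLE hp).coprime_iff_not_dvd

theorem abs_roughCount_sub_le (N y : ℕ) :
    |(roughCount N y : ℝ) - N * ∏ p ∈ y.primesLE, (1 - 1 / (p : ℝ))| ≤ 4 ^ y := by
  rw [← totient_primorial_div_primorial]
  exact (abs_card_filter_coprime_sub_le (primorial_pos y) N).trans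
    (by exact_mod_cast primorial_le_four_pow y)

/-! ### Primes congruent to `1` modulo `p`: upper bound -/

/-- The finset of primes `q ≤ N` with `q ≡ 1 [MOD p]`. -/
def primesOneMod (p N : ℕ) : Finset ℕ := {q ∈ N.primesLE | q ≡ 1 [MOD p]}

lemma mem_primesOneMod {p N q : ℕ} :
    q ∈ primesOneMod p N ↔ (q ≤ N ∧ q.Prime) ∧ q ≡ 1 [MOD p] := by
  rw [primesOneMod, mem_filter, Nat.mem_primesLE]

lemma prime_of_mem_primesOneMod {p N q : ℕ} (hq : q ∈ primesOneMod p N) : q.Prime :=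
  (mem_primesOneMod.1 hq).1.2

lemma exists_eq_mul_add_one_of_modEq_one {p q : ℕ} (hq : q.Prime) (h : q ≡ 1 [MOD p]) :
    ∃ j, q = p * (j + 1) + 1 := by
  obtain ⟨j, hj⟩ := (Nat.modEq_iff_dvd' hq.one_le).1 h.symm
  have hq1 := hq.one_lt
  obtain _ | j := j
  · simp [hq1.not_ge, Nat.sub_eq_zero_iff_le] at hj
  · exact ⟨j, by lia⟩

/-- Modulo the prime-to-`p` part `M` of `J!`, the product is `p ^ J` times a product of `J`
consecutive integers, because `p` is invertible modulo `M`. -/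
lemma ordCompl_factorial_dvd_prod {p : ℕ} (hp : p.Prime) (J : ℕ) :
    ordCompl[p] (J !) ∣ ∏ j ∈ range J, (p * (j + 1) + 1) := by
  set M := ordCompl[p] (J !)
  have hcop : p.Coprime M := Nat.coprime_ordCompl hp J.factorial_ne_zero
  obtain ⟨u, hu⟩ : ∃ u : ℕ, p * u ≡ 1 [MOD M] := by
    refine ⟨p ^ (φ M - 1), ?_⟩
    rw [← pow_succ', Nat.sub_add_cancel
      (Nat.totient_pos.2 (Nat.ordCompl_pos p J.factorial_ne_zero))]
    exact Nat.ModEq.pow_totient hcop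
  have hshift : ∏ j ∈ range J, (p * (j + 1) + 1) ≡ ∏ j ∈ range J, p * (u + 1 + j) [MOD M] := by
    refine Nat.ModEq.prod fun j _ ↦ ?_
    rw [show p * (u + 1 + j) = p * (j + 1) + p * u by ring]
    exact hu.symm.add_left _
  refine (hshift.dvd_iff dvd_rfl).2 ?_
  rw [prod_mul_distrib, ← Nat.ascFactorial_eq_prod_range]
  exact ((Nat.ordCompl_dvd _ _).trans (Nat.factorial_dvd_ascFactorial _ _)).mul_left _

lemma prod_mul_add_one_le {p : ℕ} (hp : 0 < p) (J : ℕ) :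
    ∏ j ∈ range J, (p * (j + 1) + 1) ≤ p ^ J * (J + 1)! := by
  calc ∏ j ∈ range J, (p * (j + 1) + 1) ≤ ∏ j ∈ range J, p * (j + 1 + 1) := by
        gcongr with j
        rw [mul_add_one p (j + 1)]
        lia
    _ = p ^ J * (J + 1)! := by
        rw [prod_mul_distrib, prod_const, card_range, ← prod_range_add_one_eq_factorial,
          prod_range_succ']
        simp

lemma prod_primesOneMod_dvd {p : ℕ} (hp : 0 < p) (J : ℕ) :
    ∏ q ∈ primesOneMod p (p * J + 1), q ∣ ∏ j ∈ range J, (p * (j + 1) + 1) := by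
  have hinj : Function.Injective fun j ↦ p * (j + 1) + 1 := fun a b h ↦ by
    simpa [hp.ne'] using h
  rw [← prod_image (f := fun q ↦ q) (g := fun j ↦ p * (j + 1) + 1) hinj.injOn]
  refine prod_dvd_prod_of_subset _ _ _ fun q hq ↦ ?_
  obtain ⟨⟨hqN, hq⟩, hmod⟩ := mem_primesOneMod.1 hq
  obtain ⟨j, rfl⟩ := exists_eq_mul_add_one_of_modEq_one hq hmod
  exact mem_image_of_mem _ (mem_range.2 (Nat.le_of_mul_le_mul_left (by lia) hp))

lemma prod_primesOneMod_le {p : ℕ} (hp : p.Prime) (J : ℕ) :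
    ∏ q ∈ primesOneMod p (p * J + 1) with J < q, q ≤ p ^ (3 * J) := by
  set M := ordCompl[p] (J !)
  set S := {q ∈ primesOneMod p (p * J + 1) | J < q}
  have hcop : M.Coprime (∏ q ∈ S, q) := by
    refine Nat.coprime_prod_right_iff.2 fun q hq ↦ ?_
    obtain ⟨hqS, hJq⟩ := mem_filter.1 hq
    have hq := prime_of_mem_primesOneMod hqS
    refine (hq.coprime_iff_not_dvd.2 fun hdvd ↦ hJq.not_ge ?_).symm
    exact hq.dvd_factorial.1 (hdvd.trans (Nat.ordCompl_dvd _ _))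
  have hdvd : M * ∏ q ∈ S, q ∣ ∏ j ∈ range J, (p * (j + 1) + 1) :=
    hcop.mul_dvd_of_dvd_of_dvd (ordCompl_factorial_dvd_prod hp J)
      ((prod_dvd_prod_of_subset _ _ _ (filter_subset _ _)).trans (prod_primesOneMod_dvd hp.pos J))
  have hexp : (J !).factorization p ≤ J :=
    (Nat.factorization_factorial_le_div_pred hp J).trans (Nat.div_le_self _ _)
  have hJ : J + 1 ≤ p ^ J :=
    Nat.lt_two_pow_self.trans_le (Nat.pow_le_pow_left hp.two_le J)
  refine Nat.le_of_mul_le_mul_left ?_ (Nat.ordCompl_pos p J.factorial_ne_zero)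
  calc M * ∏ q ∈ S, q ≤ p ^ J * (J + 1)! :=
        (Nat.le_of_dvd (prod_pos fun _ _ ↦ Nat.succ_pos _) hdvd).trans
          (prod_mul_add_one_le hp.pos J)
    _ = M * (p ^ J * (J + 1) * ordProj[p] (J !)) := by
        conv_lhs => rw [Nat.factorial_succ, ← Nat.ordProj_mul_ordCompl_eq_self (J !) p]
        ring
    _ ≤ M * (p ^ J * p ^ J * p ^ J) := by
        gcongr
        exact hp.pos
    _ = M * p ^ (3 * J) := by ring

lemma sum_log_primesOneMod_le {p : ℕ} (hp : p.Prime) (J : ℕ) :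
    ∑ q ∈ primesOneMod p (p * J + 1) with J < q, log q ≤ 3 * J * log p := by
  have hpos : ∀ q ∈ {q ∈ primesOneMod p (p * J + 1) | J < q}, (0 : ℝ) < q := fun q hq ↦ by
    exact_mod_cast (prime_of_mem_primesOneMod (mem_filter.1 hq).1).pos
  calc ∑ q ∈ primesOneMod p (p * J + 1) with J < q, log q
      = log (∏ q ∈ primesOneMod p (p * J + 1) with J < q, (q : ℝ)) :=
        (log_prod fun q hq ↦ (hpos q hq).ne').symm
    _ ≤ log ((p : ℝ) ^ (3 * J)) :=
        log_le_log (prod_pos hpos) <| by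
          rw [← Nat.cast_prod]
          exact_mod_cast prod_primesOneMod_le hp J
    _ = 3 * J * log p := by
        rw [log_pow]
        push_cast
        rfl

section DyadicBlock

variable {p N i : ℕ}

lemma two_pow_le_of_mem_filter_log {q : ℕ}
    (hq : q ∈ {q ∈ primesOneMod p N | Nat.log 2 q = i}) : 2 ^ i ≤ q ∧ q < 2 ^ (i + 1) := by
  obtain ⟨hqS, rfl⟩ := mem_filter.1 hq
  exact ⟨Nat.pow_log_le_self 2 (prime_of_mem_primesOneMod hqS).ne_zero,
    Nat.lt_pow_succ_log_self one_lt_two q⟩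

lemma sum_log_dyadic_primesOneMod_le (hp : p.Prime) (hp5 : 5 ≤ p) (hi : 1 ≤ i) :
    ∑ q ∈ primesOneMod p N with Nat.log 2 q = i, log q ≤ 12 * (log p / p) * 2 ^ i := by
  obtain hempty | ⟨r, hr⟩ := {q ∈ primesOneMod p N | Nat.log 2 q = i}.eq_empty_or_nonempty
  · rw [hempty, sum_empty]
    positivity
  have hp0 : (0 : ℝ) < p := by exact_mod_cast hp.pos
  have hpow : 2 ^ (i + 1) = 2 * 2 ^ i := pow_succ' 2 i
  have hp_lt : p < 2 ^ (i + 1) := by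
    have hrS := mem_primesOneMod.1 (mem_filter.1 hr).1
    obtain ⟨j, rfl⟩ := exists_eq_mul_add_one_of_modEq_one hrS.1.2 hrS.2
    have := (two_pow_le_of_mem_filter_log hr).2
    nlinarith
  have : 2 ≤ 2 ^ i := Nat.le_self_pow (by lia) 2
  set J := 2 ^ (i + 1) / p + 1 with hJ
  have : p * J = p * (2 ^ (i + 1) / p) + p := by rw [hJ, mul_add_one]
  have hdivmod := Nat.div_add_mod (2 ^ (i + 1)) p
  have hmod := Nat.mod_lt (2 ^ (i + 1)) hp.pos
  have hJ_lt : J < 2 ^ i := by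
    have : 5 * (2 ^ (i + 1) / p) ≤ p * (2 ^ (i + 1) / p) := Nat.mul_le_mul_right _ hp5
    lia
  have hsub : {q ∈ primesOneMod p N | Nat.log 2 q = i} ⊆
      {q ∈ primesOneMod p (p * J + 1) | J < q} := fun q hq ↦ by
    have hqi := two_pow_le_of_mem_filter_log hq
    have hqS := mem_primesOneMod.1 (mem_filter.1 hq).1
    rw [mem_filter, mem_primesOneMod]
    exact ⟨⟨⟨by lia, hqS.1.2⟩, hqS.2⟩, by lia⟩
  have hJ_le : (J : ℝ) ≤ 4 * 2 ^ i / p := by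
    rw [le_div_iff₀' hp0]
    exact_mod_cast (show p * J ≤ 4 * 2 ^ i by lia)
  calc _ ≤ ∑ q ∈ primesOneMod p (p * J + 1) with J < q, log q :=
        sum_le_sum_of_subset_of_nonneg hsub fun q _ _ ↦ log_natCast_nonneg q
    _ ≤ 3 * J * log p := sum_log_primesOneMod_le hp J
    _ ≤ 3 * (4 * 2 ^ i / p) * log p := by gcongr
    _ = 12 * (log p / p) * 2 ^ i := by ring

lemma sum_dyadic_primesOneMod_one_div_le (hp : p.Prime) (hp5 : 5 ≤ p) (hi : 1 ≤ i) :
    ∑ q ∈ primesOneMod p N with Nat.log 2 q = i, 1 / (q : ℝ) ≤ 18 * (log p / p) * (1 / i) := by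
  have : (0 : ℝ) < i := by exact_mod_cast hi
  have hlog2 : 0.69 < log 2 := lt_trans (by norm_num) log_two_gt_d9
  have hterm : ∀ q ∈ {q ∈ primesOneMod p N | Nat.log 2 q = i},
      1 / (q : ℝ) ≤ log q / (i * log 2 * 2 ^ i) := fun q hq ↦ by
    have hq_ge : (2 : ℝ) ^ i ≤ q := by exact_mod_cast (two_pow_le_of_mem_filter_log hq).1
    have hlog_ge : i * log 2 ≤ log q := by
      rw [← log_pow]
      exact log_le_log (by positivity) hq_ge
    rw [div_le_div_iff₀ (hq_ge.trans_lt' (by positivity)) (by positivity), one_mul]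
    gcongr
  calc _ ≤ ∑ q ∈ primesOneMod p N with Nat.log 2 q = i, log q / (i * log 2 * 2 ^ i) :=
        sum_le_sum hterm
    _ = (∑ q ∈ primesOneMod p N with Nat.log 2 q = i, log q) / (i * log 2 * 2 ^ i) := by
        rw [sum_div]
    _ ≤ (12 * (log p / p) * 2 ^ i) / (i * log 2 * 2 ^ i) := by
        gcongr
        exact sum_log_dyadic_primesOneMod_le hp hp5 hi
    _ = 12 / log 2 * (log p / p) * (1 / i) := by field_simp
    _ ≤ 18 * (log p / p) * (1 / i) := by
        gcongr
        rw [div_le_iff₀ (by positivity)]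
        linarith

end DyadicBlock

lemma harmonic_log_two_le {N : ℕ} (hN : 3 ≤ N) :
    (harmonic (Nat.log 2 N) : ℝ) ≤ log (log N) + 2 := by
  have hlog2 : 0.69 < log 2 := lt_trans (by norm_num) log_two_gt_d9
  have hlogN : 0 < log N := log_pos (by exact_mod_cast (by lia : 1 < N))
  have hK : (1 : ℝ) ≤ Nat.log 2 N := by exact_mod_cast Nat.log_pos one_lt_two (by lia)
  have hpow : (Nat.log 2 N : ℝ) * log 2 ≤ log N := by
    rw [← log_pow]
    exact log_le_log (by positivity) (by exact_mod_cast Nat.pow_log_le_self 2 (by lia))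
  have hle : (Nat.log 2 N : ℝ) ≤ exp 1 * log N := by nlinarith [exp_one_gt_d9]
  calc (harmonic (Nat.log 2 N) : ℝ) ≤ 1 + log (Nat.log 2 N) := harmonic_le_one_add_log _
    _ ≤ 1 + log (exp 1 * log N) := by gcongr
    _ = log (log N) + 2 := by
        rw [log_mul (exp_pos _).ne' hlogN.ne', log_exp]
        ring

theorem sum_primesOneMod_one_div_le {p N : ℕ} (hp : p.Prime) (hp5 : 5 ≤ p) (hN : 3 ≤ N) :
    ∑ q ∈ primesOneMod p N, 1 / (q : ℝ) ≤ 18 * (log p / p) * (log (log N) + 2) := by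
  have hmaps : ∀ q ∈ primesOneMod p N, Nat.log 2 q ∈ Icc 1 (Nat.log 2 N) := fun q hq ↦ by
    obtain ⟨⟨hqN, hq⟩, -⟩ := mem_primesOneMod.1 hq
    exact mem_Icc.2 ⟨Nat.log_pos one_lt_two hq.two_le, Nat.log_mono_right hqN⟩
  calc ∑ q ∈ primesOneMod p N, 1 / (q : ℝ)
      = ∑ i ∈ Icc 1 (Nat.log 2 N), ∑ q ∈ primesOneMod p N with Nat.log 2 q = i, 1 / (q : ℝ) :=
        (sum_fiberwise_of_maps_to hmaps _).symm
    _ ≤ ∑ i ∈ Icc 1 (Nat.log 2 N), 18 * (log p / p) * (1 / (i : ℝ)) :=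
        sum_le_sum fun i hi ↦ sum_dyadic_primesOneMod_one_div_le hp hp5 (mem_Icc.1 hi).1
    _ = 18 * (log p / p) * harmonic (Nat.log 2 N) := by
        rw [← mul_sum, harmonic_eq_sum_Icc]
        simp
    _ ≤ 18 * (log p / p) * (log (log N) + 2) := by
        gcongr
        exact harmonic_log_two_le hN

/-! ### Lower bound for the number of cyclic numbers -/

lemma exists_prime_sq_or_mul_dvd_of_not_isCyclicNum {n : ℕ} (hn : 0 < n) (h : ¬ IsCyclicNum n) :
    ∃ p, p.Prime ∧ (p * p ∣ n ∨ ∃ q, q.Prime ∧ q ≡ 1 [MOD p] ∧ p * q ∣ n) := by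
  obtain ⟨p, hp, hdvd⟩ := Nat.exists_prime_and_dvd (fun hgcd ↦ h ⟨hn, hgcd⟩)
  have hpn : p ∣ n := hdvd.trans (Nat.gcd_dvd_left _ _)
  have hpφ : p ∣ φ n := hdvd.trans (Nat.gcd_dvd_right _ _)
  rw [Nat.totient_eq_prod_factorization hn.ne', Finsupp.prod,
    Prime.dvd_finsetProd_iff hp.prime] at hpφ
  obtain ⟨q, hqn, hpq⟩ := hpφ
  have hq : q.Prime := Nat.prime_of_mem_primeFactors hqn
  refine ⟨p, hp, (hp.dvd_mul.1 hpq).imp (fun hpow ↦ ?_) fun hsub ↦ ?_⟩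
  · obtain rfl : p = q := (Nat.prime_dvd_prime_iff_eq hp hq).1 (hp.dvd_of_dvd_pow hpow)
    have hexp : n.factorization p - 1 ≠ 0 := fun h0 ↦ hp.not_dvd_one (by simpa [h0] using hpow)
    rw [← sq]
    exact (hp.pow_dvd_iff_le_factorization hn.ne').2 (by lia)
  · have hmod : q ≡ 1 [MOD p] := ((Nat.modEq_iff_dvd' hq.one_le).2 hsub).symm
    have hne : p ≠ q :=
      ((Nat.le_of_dvd (Nat.sub_pos_of_lt hq.one_lt) hsub).trans_lt
        (Nat.sub_lt hq.pos one_pos)).ne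
    exact ⟨q, hq, hmod, ((Nat.coprime_primes hp hq).2 hne).mul_dvd_of_dvd_of_dvd hpn
      (Nat.dvd_of_mem_primeFactors hqn)⟩

lemma not_dvd_of_isCyclicNum {n p q : ℕ} (hn : IsCyclicNum n) (hp : p.Prime) (hpn : p ∣ n)
    (hq : q.Prime) (hqp : q ≡ 1 [MOD p]) : ¬ q ∣ n := by
  intro hqn
  have hp_dvd : p ∣ φ q := by
    rw [Nat.totient_prime hq]
    exact (Nat.modEq_iff_dvd' hq.one_le).1 hqp.symm
  refine hp.not_dvd_one ?_
  rw [← hn.2]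
  exact Nat.dvd_gcd hpn (hp_dvd.trans (Nat.totient_dvd_of_dvd hqn))

lemma cyclicCount_natCast (N : ℕ) : cyclicCount N = #{n ∈ Ioc 0 N | IsCyclicNum n} := by
  rw [cyclicCount, Nat.floor_natCast]
  congr 1
  ext n
  simp only [mem_filter, mem_range, mem_Ioc, and_congr_left_iff]
  exact fun hn ↦ by have := hn.1; lia

lemma sum_Ioc_log_div_sq_le {y N : ℕ} (hy : 1 ≤ y) (hN : y ≤ N) :
    ∑ n ∈ Ioc y N, log n / (n : ℝ) ^ 2 ≤ (log y + 2) / y - (log N + 2) / N := by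
  induction N, hN using Nat.le_induction with
  | base => simp
  | succ N hN ih =>
    have hN1 : (1 : ℝ) ≤ N := by exact_mod_cast hy.trans hN
    have : 0 ≤ log N := log_nonneg hN1
    have hlog : log (N + 1) ≤ log N + 1 / N := by
      have := log_le_sub_one_of_pos (x := (N + 1 : ℝ) / N) (by positivity)
      rw [log_div (by positivity) (by positivity), add_div, div_self (by positivity)] at this
      linarith
    have hinv : 1 / (N : ℝ) ≤ 1 := div_le_one_of_le₀ hN1 (by positivity)
    have hstep : log ((N : ℝ) + 1) / (N + 1) ^ 2 ≤
        (log N + 2) / N - (log ((N : ℝ) + 1) + 2) / (N + 1) := by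
      calc log ((N : ℝ) + 1) / (N + 1) ^ 2 ≤ (log N + 1) / (N * (N + 1)) := by
            gcongr <;> nlinarith
        _ = (log N + 2) / N - (log N + 1 / N + 2) / ((N : ℝ) + 1) := by field_simp; ring
        _ ≤ _ := by gcongr
    rw [sum_Ioc_succ_top hN]
    push_cast
    linarith

lemma card_filter_dvd_le (N d : ℕ) : (#{n ∈ Ioc 0 N | d ∣ n} : ℝ) ≤ N * (1 / d) := by
  rw [Nat.Ioc_filter_dvd_card_eq_div, mul_one_div]
  exact Nat.cast_div_le

lemma filter_coprime_primorial_subset (N y : ℕ) :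
    {n ∈ Ioc 0 N | (primorial y).Coprime n} ⊆
      {n ∈ Ioc 0 N | IsCyclicNum n} ∪ {p ∈ Ioc y N | p.Prime}.biUnion fun p ↦
        {n ∈ Ioc 0 N | p * p ∣ n} ∪
          (primesOneMod p N).biUnion fun q ↦ {n ∈ Ioc 0 N | p * q ∣ n} := by
  intro n hn
  obtain ⟨hnN, hcop⟩ := mem_filter.1 hn
  obtain ⟨hn0, hnle⟩ := mem_Ioc.1 hnN
  by_cases hcyc : IsCyclicNum n
  · exact mem_union_left _ (mem_filter.2 ⟨hnN, hcyc⟩)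
  obtain ⟨p, hp, h⟩ := exists_prime_sq_or_mul_dvd_of_not_isCyclicNum hn0 hcyc
  have hpn : p ∣ n := by
    obtain h | ⟨q, -, -, h⟩ := h <;> exact dvd_of_mul_right_dvd h
  have hpy : p ∈ {p ∈ Ioc y N | p.Prime} := by
    refine mem_filter.2 ⟨mem_Ioc.2 ⟨?_, (Nat.le_of_dvd hn0 hpn).trans hnle⟩, hp⟩
    by_contra! hle
    exact coprime_primorial_iff.1 hcop p (Nat.mem_primesLE.2 ⟨hle, hp⟩) hpn
  refine mem_union_right _ (mem_biUnion.2 ⟨p, hpy, mem_union.2 ?_⟩)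
  refine h.imp (fun hsq ↦ mem_filter.2 ⟨hnN, hsq⟩) fun ⟨q, hq, hmod, hpq⟩ ↦ ?_
  have hqN : q ≤ N := (Nat.le_of_dvd hn0 (dvd_of_mul_left_dvd hpq)).trans hnle
  exact mem_biUnion.2 ⟨q, mem_primesOneMod.2 ⟨⟨hqN, hq⟩, hmod⟩, mem_filter.2 ⟨hnN, hpq⟩⟩

lemma roughCount_le_cyclicCount_add (N y : ℕ) :
    (roughCount N y : ℝ) ≤ cyclicCount N + ∑ p ∈ Ioc y N with p.Prime,
      N * (1 / (p : ℝ)) * (1 / p + ∑ q ∈ primesOneMod p N, 1 / (q : ℝ)) := by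
  have hcard : roughCount N y ≤ cyclicCount N + ∑ p ∈ Ioc y N with p.Prime,
      (#{n ∈ Ioc 0 N | p * p ∣ n} + ∑ q ∈ primesOneMod p N, #{n ∈ Ioc 0 N | p * q ∣ n}) := by
    rw [cyclicCount_natCast]
    refine (card_le_card (filter_coprime_primorial_subset N y)).trans ?_
    refine (card_union_le _ _).trans (Nat.add_le_add_left (card_biUnion_le.trans ?_) _)
    exact sum_le_sum fun p _ ↦
      (card_union_le _ _).trans (Nat.add_le_add_left card_biUnion_le _)
  have hmul : ∀ p q : ℕ, (#{n ∈ Ioc 0 N | p * q ∣ n} : ℝ) ≤ N * (1 / p) * (1 / q) := fun p q ↦ by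
    refine (card_filter_dvd_le N (p * q)).trans_eq ?_
    push_cast
    ring
  refine (Nat.cast_le.2 hcard).trans ?_
  push_cast
  simp only [mul_add, mul_sum]
  gcongr <;> exact hmul _ _

lemma one_div_add_sum_primesOneMod_one_div_le {p N : ℕ} (hp : p.Prime) (hp5 : 5 ≤ p) (hN : 3 ≤ N)
    (hL : 0 ≤ log (log N)) :
    1 / (p : ℝ) + ∑ q ∈ primesOneMod p N, 1 / (q : ℝ) ≤
      19 * (log (log N) + 2) * (log p / p) := by
  have hp5' : (5 : ℝ) ≤ p := by exact_mod_cast hp5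
  have hlogp : 1 ≤ log p := by
    rw [le_log_iff_exp_le (by linarith)]
    linarith [exp_one_lt_d9]
  have hone : 1 / (p : ℝ) ≤ (log (log N) + 2) * (log p / p) := by
    rw [← mul_div_assoc]
    gcongr
    nlinarith
  linarith [sum_primesOneMod_one_div_le hp hp5 hN]

theorem roughCount_sub_le_cyclicCount {N y : ℕ} (hy : 5 ≤ y) (hyN : y ≤ N)
    (hL : 0 ≤ log (log N)) :
    roughCount N y - N * (19 * (log (log N) + 2) * ((log y + 2) / y)) ≤ cyclicCount N := by
  rw [sub_le_iff_le_add]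
  refine (roughCount_le_cyclicCount_add N y).trans ?_
  gcongr
  calc ∑ p ∈ Ioc y N with p.Prime,
        N * (1 / (p : ℝ)) * (1 / p + ∑ q ∈ primesOneMod p N, 1 / (q : ℝ))
      ≤ ∑ p ∈ Ioc y N with p.Prime,
        N * (1 / (p : ℝ)) * (19 * (log (log N) + 2) * (log p / p)) := by
        gcongr with p hp
        obtain ⟨hpy, hp⟩ := mem_filter.1 hp
        exact one_div_add_sum_primesOneMod_one_div_le hp
          (hy.trans (mem_Ioc.1 hpy).1.le) (by lia) hL
    _ = N * (19 * (log (log N) + 2) * ∑ p ∈ Ioc y N with p.Prime, log p / (p : ℝ) ^ 2) := by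
        simp only [mul_sum]
        exact sum_congr rfl fun p _ ↦ by ring
    _ ≤ N * (19 * (log (log N) + 2) * ∑ n ∈ Ioc y N, log n / (n : ℝ) ^ 2) := by
        gcongr
        exact filter_subset _ _
    _ ≤ N * (19 * (log (log N) + 2) * ((log y + 2) / y)) := by
        gcongr
        exact (sum_Ioc_log_div_sq_le (by lia) hyN).trans (sub_le_self _ (by positivity))

/-! ### Turán's variance inequality -/

section Turan

variable {M : ℕ} {Q : Finset ℕ}

/-- The number of elements of `Q` that divide `m`, as a real number. -/
noncomputable def divisorCountIn (Q : Finset ℕ) (m : ℕ) : ℝ := ∑ q ∈ Q, if q ∣ m then 1 else 0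

lemma sum_Ioc_ite_dvd (M d : ℕ) : ∑ m ∈ Ioc 0 M, (if d ∣ m then (1 : ℝ) else 0) = (M / d : ℕ) := by
  rw [sum_boole, Nat.Ioc_filter_dvd_card_eq_div]

lemma mul_sum_one_div_sub_card_le_sum_divisorCountIn (M : ℕ) (Q : Finset ℕ) :
    M * ∑ q ∈ Q, 1 / (q : ℝ) - #Q ≤ ∑ m ∈ Ioc 0 M, divisorCountIn Q m := by
  simp only [divisorCountIn]
  rw [sum_comm, mul_sum, card_eq_sum_ones, Nat.cast_sum, ← sum_sub_distrib]
  gcongr with q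
  rw [sum_Ioc_ite_dvd, ← Nat.floor_div_eq_div (K := ℝ), mul_one_div, Nat.cast_one]
  linarith [Nat.lt_floor_add_one ((M : ℝ) / q)]

lemma sum_Ioc_ite_dvd_and_dvd_le {q r : ℕ} (h : q.Coprime r) (M : ℕ) :
    ∑ m ∈ Ioc 0 M, (if q ∣ m ∧ r ∣ m then (1 : ℝ) else 0) ≤ M * (1 / q) * (1 / r) := by
  have hiff : ∀ m, q ∣ m ∧ r ∣ m ↔ q * r ∣ m := fun m ↦
    ⟨fun hm ↦ h.mul_dvd_of_dvd_of_dvd hm.1 hm.2,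
      fun hm ↦ ⟨dvd_of_mul_right_dvd hm, dvd_of_mul_left_dvd hm⟩⟩
  simp only [hiff, sum_Ioc_ite_dvd]
  refine Nat.cast_div_le.trans_eq ?_
  push_cast
  ring

lemma sum_divisorCountIn_sq_le (hQ : ∀ q ∈ Q, q.Prime) :
    ∑ m ∈ Ioc 0 M, divisorCountIn Q m ^ 2 ≤
      M * (∑ q ∈ Q, 1 / (q : ℝ)) ^ 2 + M * ∑ q ∈ Q, 1 / (q : ℝ) := by
  have hsq : ∀ m, divisorCountIn Q m ^ 2 =
      ∑ q ∈ Q, ∑ r ∈ Q, if q ∣ m ∧ r ∣ m then (1 : ℝ) else 0 := fun m ↦ by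
    rw [sq, divisorCountIn, sum_mul_sum]
    simp only [ite_and, ite_mul, one_mul, zero_mul]
  have hrow : ∀ q ∈ Q, ∑ r ∈ Q, ∑ m ∈ Ioc 0 M, (if q ∣ m ∧ r ∣ m then (1 : ℝ) else 0) ≤
      M * (1 / q) * ∑ r ∈ Q, 1 / (r : ℝ) + M * (1 / q) := fun q hq ↦ by
    rw [← sum_erase_add _ _ hq]
    gcongr
    · calc ∑ r ∈ Q.erase q, ∑ m ∈ Ioc 0 M, (if q ∣ m ∧ r ∣ m then (1 : ℝ) else 0)
          ≤ ∑ r ∈ Q.erase q, M * (1 / (q : ℝ)) * (1 / r) := by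
            refine sum_le_sum fun r hr ↦ sum_Ioc_ite_dvd_and_dvd_le ?_ M
            obtain ⟨hne, hrQ⟩ := mem_erase.1 hr
            exact (Nat.coprime_primes (hQ q hq) (hQ r hrQ)).2 hne.symm
        _ ≤ M * (1 / q) * ∑ r ∈ Q, 1 / (r : ℝ) := by
            rw [← mul_sum]
            gcongr
            exact erase_subset _ _
    · simp only [and_self, sum_Ioc_ite_dvd, mul_one_div]
      exact Nat.cast_div_le
  calc ∑ m ∈ Ioc 0 M, divisorCountIn Q m ^ 2
      = ∑ q ∈ Q, ∑ r ∈ Q, ∑ m ∈ Ioc 0 M, (if q ∣ m ∧ r ∣ m then (1 : ℝ) else 0) := by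
        simp only [hsq]
        rw [sum_comm]
        exact sum_congr rfl fun q _ ↦ sum_comm
    _ ≤ ∑ q ∈ Q, (M * (1 / (q : ℝ)) * ∑ r ∈ Q, 1 / (r : ℝ) + M * (1 / q)) := sum_le_sum hrow
    _ = M * (∑ q ∈ Q, 1 / (q : ℝ)) ^ 2 + M * ∑ q ∈ Q, 1 / (q : ℝ) := by
        rw [sum_add_distrib, ← sum_mul, ← mul_sum]
        ring

lemma sum_divisorCountIn_sub_sq_le (hQ : Q ⊆ M.primesLE) :
    ∑ m ∈ Ioc 0 M, (divisorCountIn Q m - ∑ q ∈ Q, 1 / (q : ℝ)) ^ 2 ≤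
      3 * M * ∑ q ∈ Q, 1 / (q : ℝ) := by
  set S := ∑ q ∈ Q, 1 / (q : ℝ)
  have : 0 ≤ S := by positivity
  have hcard : (#Q : ℝ) ≤ M := by
    have := card_le_card (hQ.trans (Nat.primesLE_eq_filter_Ioc_zero M ▸ filter_subset _ _))
    simpa using this
  have hexpand : ∑ m ∈ Ioc 0 M, (divisorCountIn Q m - S) ^ 2 =
      ∑ m ∈ Ioc 0 M, divisorCountIn Q m ^ 2 - 2 * S * ∑ m ∈ Ioc 0 M, divisorCountIn Q m +
        M * S ^ 2 := by
    simp only [sub_sq, sum_add_distrib, sum_sub_distrib, mul_sum, sum_const, Nat.card_Ioc,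
      Nat.sub_zero, nsmul_eq_mul]
    congr 2
    exact sum_congr rfl fun m _ ↦ by ring
  have hmean : S * (M * S - M) ≤ S * ∑ m ∈ Ioc 0 M, divisorCountIn Q m := by
    gcongr
    linarith [mul_sum_one_div_sub_card_le_sum_divisorCountIn M Q]
  linarith [sum_divisorCountIn_sq_le (M := M) fun q hq ↦ Nat.prime_of_mem_primesLE (hQ hq)]

theorem card_filter_forall_not_dvd_le (hQ : Q ⊆ M.primesLE) (hS : 0 < ∑ q ∈ Q, 1 / (q : ℝ)) :
    (#{m ∈ Ioc 0 M | ∀ q ∈ Q, ¬ q ∣ m} : ℝ) ≤ 3 * M / ∑ q ∈ Q, 1 / (q : ℝ) := by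
  set S := ∑ q ∈ Q, 1 / (q : ℝ)
  have hvar : #{m ∈ Ioc 0 M | ∀ q ∈ Q, ¬ q ∣ m} * S ^ 2 ≤ 3 * M * S :=
    calc (#{m ∈ Ioc 0 M | ∀ q ∈ Q, ¬ q ∣ m} : ℝ) * S ^ 2
        = ∑ m ∈ Ioc 0 M with ∀ q ∈ Q, ¬ q ∣ m, (divisorCountIn Q m - S) ^ 2 := by
          rw [← nsmul_eq_mul, ← sum_const]
          refine sum_congr rfl fun m hm ↦ ?_
          have hzero : divisorCountIn Q m = 0 :=
            sum_eq_zero fun q hq ↦ if_neg ((mem_filter.1 hm).2 q hq)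
          rw [hzero, zero_sub, neg_sq]
      _ ≤ ∑ m ∈ Ioc 0 M, (divisorCountIn Q m - S) ^ 2 := by
          gcongr
          exact filter_subset _ _
      _ ≤ 3 * M * S := sum_divisorCountIn_sub_sq_le hQ
  rw [le_div_iff₀ hS]
  nlinarith

end Turan

/-! ### Sums of powers and partial summation -/

section PowerSums

variable {η x : ℝ}

lemma exists_rpow_neg_sub_rpow_neg_eq (hx : 0 < x) :
    ∃ c ∈ Set.Ioo x (x + 1), x ^ (-η) - (x + 1) ^ (-η) = η * c ^ (-(1 + η)) := by
  obtain ⟨c, hc, hslope⟩ := exists_hasDerivAt_eq_slope (fun t : ℝ ↦ t ^ (-η))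
    (fun t ↦ -η * t ^ (-η - 1)) (lt_add_one x)
    (ContinuousOn.rpow_const continuousOn_id fun t ht ↦ .inl (hx.trans_le ht.1).ne')
    fun t ht ↦ hasDerivAt_rpow_const (.inl (hx.trans ht.1).ne')
  refine ⟨c, hc, ?_⟩
  rw [add_sub_cancel_left, div_one, neg_mul, show -η - 1 = -(1 + η) by ring] at hslope
  linarith

lemma mul_rpow_le_rpow_neg_sub (hη : 0 < η) (hx : 0 < x) :
    η * (x + 1) ^ (-(1 + η)) ≤ x ^ (-η) - (x + 1) ^ (-η) := by
  obtain ⟨c, ⟨hxc, hcx⟩, h⟩ := exists_rpow_neg_sub_rpow_neg_eq (η := η) hx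
  rw [h]
  have := hx.trans hxc
  gcongr η * ?_
  exact rpow_le_rpow_of_nonpos this hcx.le (by linarith)

lemma rpow_neg_sub_le_mul_rpow (hη : 0 < η) (hx : 0 < x) :
    x ^ (-η) - (x + 1) ^ (-η) ≤ η * x ^ (-(1 + η)) := by
  obtain ⟨c, ⟨hxc, -⟩, h⟩ := exists_rpow_neg_sub_rpow_neg_eq (η := η) hx
  rw [h]
  gcongr η * ?_
  exact rpow_le_rpow_of_nonpos hx hxc.le (by linarith)

lemma hasSum_rpow_neg_sub_rpow_neg (hη : 0 < η) (hx : 0 < x) :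
    HasSum (fun n : ℕ ↦ (x + n) ^ (-η) - (x + n + 1) ^ (-η)) (x ^ (-η)) := by
  rw [hasSum_iff_tendsto_nat_of_nonneg fun n ↦
    (by positivity : 0 ≤ η * (x + n + 1) ^ (-(1 + η))).trans
      (mul_rpow_le_rpow_neg_sub hη (by positivity))]
  have hpartial : ∀ n : ℕ, ∑ i ∈ range n, ((x + i) ^ (-η) - (x + i + 1) ^ (-η)) =
      x ^ (-η) - (x + n) ^ (-η) := fun n ↦ by
    simpa [add_assoc] using sum_range_sub' (fun i : ℕ ↦ (x + i) ^ (-η)) n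
  simp only [hpartial]
  have hzero : Tendsto (fun n : ℕ ↦ (x + n) ^ (-η)) atTop (𝓝 0) :=
    (tendsto_rpow_neg_atTop hη).comp
      (tendsto_atTop_add_const_left _ _ tendsto_natCast_atTop_atTop)
  simpa using hzero.const_sub (x ^ (-η))

lemma rpow_le_rpow_neg_sub_div (hη : 0 < η) (hx : 0 < x) (n : ℕ) :
    (x + n + 1) ^ (-(1 + η)) ≤ ((x + n) ^ (-η) - (x + n + 1) ^ (-η)) / η := by
  rw [le_div_iff₀' hη]
  exact mul_rpow_le_rpow_neg_sub hη (by positivity)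

lemma summable_add_add_one_rpow (hη : 0 < η) (hx : 0 < x) :
    Summable fun n : ℕ ↦ (x + n + 1) ^ (-(1 + η)) :=
  ((hasSum_rpow_neg_sub_rpow_neg hη hx).div_const η).summable.of_nonneg_of_le
    (fun _ ↦ by positivity) (rpow_le_rpow_neg_sub_div hη hx)

lemma tsum_add_add_one_rpow_le (hη : 0 < η) (hx : 0 < x) :
    ∑' n : ℕ, (x + n + 1) ^ (-(1 + η)) ≤ x ^ (-η) / η := by
  have htele := (hasSum_rpow_neg_sub_rpow_neg hη hx).div_const η
  exact ((summable_add_add_one_rpow hη hx).tsum_le_tsum (rpow_le_rpow_neg_sub_div hη hx)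
    htele.summable).trans_eq htele.tsum_eq

lemma summable_add_one_rpow (hη : 0 < η) : Summable fun n : ℕ ↦ ((n : ℝ) + 1) ^ (-(1 + η)) := by
  have := (summable_nat_add_iff 1).2 (summable_nat_rpow (p := -(1 + η)) |>.2 (by linarith))
  simpa using this

lemma one_div_le_tsum_add_one_rpow (hη : 0 < η) :
    1 / η ≤ ∑' n : ℕ, ((n : ℝ) + 1) ^ (-(1 + η)) := by
  have htele := (hasSum_rpow_neg_sub_rpow_neg hη one_pos).div_const η
  rw [one_rpow] at htele
  rw [← htele.tsum_eq]
  refine htele.summable.tsum_le_tsum (fun n ↦ ?_) (summable_add_one_rpow hη)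
  rw [div_le_iff₀' hη, add_comm (1 : ℝ)]
  exact rpow_neg_sub_le_mul_rpow hη (by positivity)

lemma tsum_add_one_rpow_le (hη : 0 < η) (hη1 : η ≤ 1) :
    ∑' n : ℕ, ((n : ℝ) + 1) ^ (-(1 + η)) ≤ 2 / η := by
  have htail := tsum_add_add_one_rpow_le hη one_pos
  rw [one_rpow] at htail
  have hone : 1 ≤ 1 / η := by rwa [one_le_div₀ hη]
  rw [(summable_add_one_rpow hη).tsum_eq_zero_add, Nat.cast_zero, zero_add, one_rpow]
  simp only [Nat.cast_succ, add_comm _ (1 : ℝ)] at htail ⊢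
  linarith [show 2 / η = 1 / η + 1 / η by ring]

end PowerSums

section PartialSummation

variable {E : Type*} [NormedAddCommGroup E] [NormedSpace ℝ E] {a : ℕ → E} {P : ℝ}

lemma norm_sum_smul_le_of_sum_abs_sub_le (ha : ∀ n, ‖∑ m ∈ range n, a m‖ ≤ P) {f : ℕ → ℝ} {V : ℝ}
    (hV : ∀ N, ∑ n ∈ range N, |f (n + 1) - f n| ≤ V) (N : ℕ) :
    ‖∑ n ∈ range N, f n • a n‖ ≤ P * (|f 0| + 2 * V) := by
  have hP : 0 ≤ P := (norm_nonneg _).trans (ha 0)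
  have hlast : |f (N - 1)| ≤ |f 0| + V := by
    have hsum := abs_sum_le_sum_abs (fun n ↦ f (n + 1) - f n) (range (N - 1))
    rw [sum_range_sub] at hsum
    linarith [hV (N - 1), abs_sub_abs_le_abs_sub (f (N - 1)) (f 0)]
  have hboundary : ‖f (N - 1) • ∑ i ∈ range N, a i‖ ≤ (|f 0| + V) * P := by
    rw [norm_smul, norm_eq_abs]
    exact mul_le_mul hlast (ha N) (norm_nonneg _) ((abs_nonneg _).trans hlast)
  have hsum : ‖∑ i ∈ range (N - 1), (f (i + 1) - f i) • ∑ j ∈ range (i + 1), a j‖ ≤ V * P :=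
    calc _ ≤ ∑ i ∈ range (N - 1), |f (i + 1) - f i| * P := by
          refine norm_sum_le_of_le _ fun i _ ↦ ?_
          rw [norm_smul, norm_eq_abs]
          gcongr
          exact ha _
      _ ≤ V * P := by
          rw [← sum_mul]
          gcongr
          exact hV _
  rw [sum_range_by_parts f a N]
  linarith [norm_sub_le (f (N - 1) • ∑ i ∈ range N, a i)
    (∑ i ∈ range (N - 1), (f (i + 1) - f i) • ∑ j ∈ range (i + 1), a j)]

lemma norm_sum_smul_le_of_antitone (ha : ∀ n, ‖∑ m ∈ range n, a m‖ ≤ P) {f : ℕ → ℝ}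
    (hf : Antitone f) (hf0 : ∀ n, 0 ≤ f n) (N : ℕ) :
    ‖∑ n ∈ range N, f n • a n‖ ≤ 3 * P * f 0 := by
  have hvar : ∀ N, ∑ n ∈ range N, |f (n + 1) - f n| ≤ f 0 := fun N ↦ by
    simp only [abs_of_nonpos (sub_nonpos.2 (hf (Nat.le_succ _))), neg_sub, sum_range_sub']
    exact sub_le_self _ (hf0 N)
  refine (norm_sum_smul_le_of_sum_abs_sub_le ha hvar N).trans_eq ?_
  rw [abs_of_nonneg (hf0 0)]
  ring

lemma norm_sum_add_one_rpow_smul_le (ha : ∀ n, ‖∑ m ∈ range n, a m‖ ≤ P) {η : ℝ} (hη : 0 ≤ η)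
    (N : ℕ) : ‖∑ n ∈ range N, ((n : ℝ) + 1) ^ (-(1 + η)) • a n‖ ≤ 3 * P := by
  have hanti : Antitone fun n : ℕ ↦ ((n : ℝ) + 1) ^ (-(1 + η)) := fun m n hmn ↦
    rpow_le_rpow_of_nonpos (by positivity) (by gcongr) (by linarith)
  simpa using norm_sum_smul_le_of_antitone ha hanti (fun n ↦ by positivity) N

/-- The exponent `3 / 2` leaves room to absorb a logarithm into the derivative of `x ^ (-s)`. -/
lemma norm_sum_smul_le_of_abs_deriv_le (ha : ∀ n, ‖∑ m ∈ range n, a m‖ ≤ P) {f f' : ℝ → ℝ} {c : ℝ}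
    (hc : 0 ≤ c) (hf : ∀ x, 1 ≤ x → HasDerivAt f (f' x) x)
    (hf' : ∀ x, 1 ≤ x → |f' x| ≤ c * x ^ (-(3 / 2) : ℝ)) (N : ℕ) :
    ‖∑ n ∈ range N, f (n + 1) • a n‖ ≤ P * (|f 1| + 8 * c) := by
  have hstep : ∀ n : ℕ, |f (n + 1 + 1) - f (n + 1)| ≤ c * ((n : ℝ) + 1) ^ (-(3 / 2) : ℝ) := by
    intro n
    have hmvt := (convex_Icc ((n : ℝ) + 1) (n + 1 + 1)).norm_image_sub_le_of_norm_hasDerivWithin_le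
      (f := f) (f' := f') (C := c * ((n : ℝ) + 1) ^ (-(3 / 2) : ℝ)) (x := n + 1) (y := n + 1 + 1)
      (fun x hx ↦ (hf x (by linarith [hx.1, n.cast_nonneg (α := ℝ)])).hasDerivWithinAt)
      (fun x hx ↦ (hf' x (by linarith [hx.1, n.cast_nonneg (α := ℝ)])).trans
        (mul_le_mul_of_nonneg_left
          (rpow_le_rpow_of_nonpos (by positivity) hx.1 (by norm_num)) hc))
      ⟨le_rfl, by linarith⟩ ⟨by linarith, le_rfl⟩
    simpa using hmvt
  have hthree_halves : -(3 / 2 : ℝ) = -(1 + 1 / 2) := by norm_num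
  have hvar : ∀ N, ∑ n ∈ range N, |f ((n + 1 : ℕ) + 1) - f (n + 1)| ≤ c * 4 := fun N ↦
    calc _ ≤ ∑ n ∈ range N, c * ((n : ℝ) + 1) ^ (-(1 + 1 / 2) : ℝ) := by
          rw [← hthree_halves]
          push_cast
          exact sum_le_sum fun n _ ↦ hstep n
      _ ≤ c * ∑' n : ℕ, ((n : ℝ) + 1) ^ (-(1 + 1 / 2) : ℝ) := by
          rw [← mul_sum]
          gcongr
          exact (summable_add_one_rpow (by norm_num)).sum_le_tsum _ fun n _ ↦ by positivity
      _ ≤ c * 4 := by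
          gcongr
          exact (tsum_add_one_rpow_le (by norm_num) (by norm_num)).trans (by norm_num)
  refine (norm_sum_smul_le_of_sum_abs_sub_le (f := fun n ↦ f (n + 1)) ha hvar N).trans_eq ?_
  rw [Nat.cast_zero, zero_add]
  ring

lemma abs_mul_rpow_sub_mul_rpow_le {x s t : ℝ} (hx : 1 ≤ x) (hs : 1 ≤ s) (hst : s ≤ t)
    (ht : t ≤ 2) :
    |t * x ^ (-t - 1) - s * x ^ (-s - 1)| ≤ 5 * (t - s) * x ^ (-(3 / 2) : ℝ) := by
  have hx0 : 0 < x := by linarith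
  have hlog0 : 0 ≤ log x := log_nonneg hx
  have hderiv : ∀ r, HasDerivAt (fun r : ℝ ↦ r * x ^ (-r - 1))
      (x ^ (-r - 1) * (1 - r * log x)) r := fun r ↦ by
    have := (hasDerivAt_id r).mul (((hasDerivAt_neg r).sub_const 1).const_rpow hx0)
    exact this.congr_deriv (by simp only [id]; ring)
  have hbound : ∀ r ∈ Set.Icc s t,
      ‖x ^ (-r - 1) * (1 - r * log x)‖ ≤ 5 * x ^ (-(3 / 2) : ℝ) := fun r ⟨hsr, hrt⟩ ↦ by
    have hlog : log x ≤ 2 * x ^ (1 / 2 : ℝ) := by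
      linarith [log_le_rpow_div hx0.le (by norm_num : (0 : ℝ) < 1 / 2)]
    have hone : 1 ≤ x ^ (1 / 2 : ℝ) := one_le_rpow hx (by norm_num)
    rw [norm_mul, norm_eq_abs, norm_eq_abs, abs_of_pos (rpow_pos_of_pos hx0 _)]
    calc x ^ (-r - 1) * |1 - r * log x| ≤ x ^ (-2 : ℝ) * (5 * x ^ (1 / 2 : ℝ)) := by
          gcongr
          · linarith
          · exact abs_le.2 ⟨by nlinarith, by nlinarith⟩
      _ = 5 * x ^ (-(3 / 2) : ℝ) := by
          rw [mul_left_comm, ← rpow_add hx0]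
          norm_num
  have := (convex_Icc s t).norm_image_sub_le_of_norm_hasDerivWithin_le
    (fun r _ ↦ (hderiv r).hasDerivWithinAt) hbound ⟨le_rfl, hst⟩ ⟨hst, le_rfl⟩
  rw [norm_eq_abs, norm_eq_abs, abs_of_nonneg (sub_nonneg.2 hst)] at this
  linarith

lemma norm_sum_add_one_rpow_sub_smul_le (ha : ∀ n, ‖∑ m ∈ range n, a m‖ ≤ P) {η η' : ℝ}
    (hη : 0 ≤ η) (hle : η ≤ η') (hη' : η' ≤ 1) (N : ℕ) :
    ‖∑ n ∈ range N, (((n : ℝ) + 1) ^ (-(1 + η)) - ((n : ℝ) + 1) ^ (-(1 + η'))) • a n‖ ≤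
      40 * P * (η' - η) := by
  refine (norm_sum_smul_le_of_abs_deriv_le ha (f := fun x ↦ x ^ (-(1 + η)) - x ^ (-(1 + η')))
    (c := 5 * (η' - η)) (by linarith)
    (fun x hx ↦ (hasDerivAt_rpow_const (.inl (by linarith))).sub
      (hasDerivAt_rpow_const (.inl (by linarith))))
    (fun x hx ↦ ?_) N).trans_eq ?_
  · convert abs_mul_rpow_sub_mul_rpow_le hx (s := 1 + η) (t := 1 + η') (by linarith) (by linarith)
      (by linarith) using 2
    · ring
    · ring
  · rw [one_rpow, one_rpow, sub_self, abs_zero]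
    ring

end PartialSummation

/-! ### Dirichlet `L`-values near `1` -/

section LValue

variable {p : ℕ}

/-- The value `L(1 + η, χ)`; only `η > 0` is meaningful. -/
noncomputable def lValue (χ : DirichletCharacter ℂ p) (η : ℝ) : ℂ :=
  LSeries (fun n ↦ χ (n : ZMod p)) (1 + (η : ℂ))

lemma sum_range_level_eq_zero [NeZero p] {χ : DirichletCharacter ℂ p} (hχ : χ ≠ 1) :
    ∑ m ∈ range p, χ (m : ZMod p) = 0 := by
  rw [← MulChar.sum_eq_zero_of_ne_one hχ]
  refine sum_nbij' (fun m : ℕ ↦ (m : ZMod p)) ZMod.val (by simp)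
    (fun a _ ↦ mem_range.2 a.val_lt) (fun m hm ↦ ZMod.val_cast_of_lt (mem_range.1 hm))
    (by simp) (by simp)

lemma norm_sum_range_le [NeZero p] {χ : DirichletCharacter ℂ p} (hχ : χ ≠ 1) (n : ℕ) :
    ‖∑ m ∈ range n, χ (m : ZMod p)‖ ≤ p := by
  induction n using Nat.strong_induction_on with
  | _ n ih =>
    rcases lt_or_ge n p with hnp | hpn
    · calc _ ≤ ∑ _ ∈ range n, (1 : ℝ) := norm_sum_le_of_le _ fun _ _ ↦ χ.norm_le_one _
        _ ≤ p := by simpa using hnp.le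
    · obtain ⟨k, rfl⟩ := Nat.exists_eq_add_of_le hpn
      rw [sum_range_add, sum_range_level_eq_zero hχ, zero_add]
      simpa using ih k (by linarith [NeZero.pos p])

lemma norm_sum_range_add_one_le [NeZero p] {χ : DirichletCharacter ℂ p} (hχ : χ ≠ 1) (n : ℕ) :
    ‖∑ m ∈ range n, χ ((m + 1 : ℕ) : ZMod p)‖ ≤ p := by
  have : Fact (1 < p) := ⟨by
    by_contra! hle
    obtain rfl : p = 1 := le_antisymm hle (NeZero.pos p)
    exact hχ (DirichletCharacter.level_one χ)⟩
  simpa [sum_range_succ', MulChar.map_zero χ] using norm_sum_range_le hχ (n + 1)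

variable {η : ℝ}

lemma hasSum_lValue (χ : DirichletCharacter ℂ p) (hη : 0 < η) :
    HasSum (fun n : ℕ ↦ ((n : ℝ) + 1) ^ (-(1 + η)) • χ ((n + 1 : ℕ) : ZMod p)) (lValue χ η) := by
  have h := (DirichletCharacter.LSeriesSummable_of_one_lt_re χ (s := 1 + (η : ℂ))
    (by simpa using hη)).hasSum
  rw [← hasSum_nat_add_iff' 1, range_one, sum_singleton, LSeries.term_zero, sub_zero] at h
  refine h.congr_fun fun n ↦ ?_
  rw [LSeries.term_of_ne_zero n.succ_ne_zero, Complex.real_smul,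
    Complex.ofReal_cpow (by positivity), div_eq_mul_inv, ← Complex.cpow_neg, mul_comm]
  push_cast
  rfl

lemma norm_lValue_le_two_div (χ : DirichletCharacter ℂ p) (hη : 0 < η) (hη1 : η ≤ 1) :
    ‖lValue χ η‖ ≤ 2 / η := by
  refine le_trans ?_ (tsum_add_one_rpow_le hη hη1)
  rw [← (hasSum_lValue χ hη).tsum_eq]
  refine tsum_of_norm_bounded (summable_add_one_rpow hη).hasSum fun n ↦ ?_
  rw [norm_smul, norm_of_nonneg (by positivity)]
  exact mul_le_of_le_one_right (by positivity) (χ.norm_le_one _)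

lemma norm_lValue_le [NeZero p] {χ : DirichletCharacter ℂ p} (hχ : χ ≠ 1) (hη : 0 < η) :
    ‖lValue χ η‖ ≤ 3 * p :=
  le_of_tendsto' (hasSum_lValue χ hη).tendsto_sum_nat.norm
    (norm_sum_add_one_rpow_smul_le (norm_sum_range_add_one_le hχ) hη.le)

lemma norm_lValue_sub_lValue_le [NeZero p] {χ : DirichletCharacter ℂ p} (hχ : χ ≠ 1) {η' : ℝ}
    (hη : 0 < η) (hle : η ≤ η') (hη' : η' ≤ 1) :
    ‖lValue χ η - lValue χ η'‖ ≤ 40 * p * (η' - η) := by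
  refine le_of_tendsto' ((hasSum_lValue χ hη).sub
    (hasSum_lValue χ (hη.trans_le hle))).tendsto_sum_nat.norm fun N ↦ ?_
  simp only [← sub_smul]
  exact norm_sum_add_one_rpow_sub_smul_le (norm_sum_range_add_one_le hχ) hη.le hle hη' N

lemma one_div_sq_mul_le_rpow_mul_tsum [NeZero p] (hη : 0 < η) (hη1 : η ≤ 1) :
    1 / ((p : ℝ) ^ 2 * η) ≤ (p : ℝ) ^ (-(1 + η)) * ∑' n : ℕ, ((n : ℝ) + 1) ^ (-(1 + η)) := by
  have hp : (1 : ℝ) ≤ p := by exact_mod_cast NeZero.one_le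
  calc 1 / ((p : ℝ) ^ 2 * η) = (p : ℝ) ^ (-2 : ℝ) * (1 / η) := by
        rw [rpow_neg (by positivity), rpow_two]
        field_simp
    _ ≤ _ := by
        gcongr
        · linarith
        · exact one_div_le_tsum_add_one_rpow hη

lemma one_div_sq_mul_le_norm_lValue_one [NeZero p] (hη : 0 < η) (hη1 : η ≤ 1) :
    1 / ((p : ℝ) ^ 2 * η) ≤ ‖lValue (1 : DirichletCharacter ℂ p) η‖ := by
  have hre := Complex.hasSum_re (hasSum_lValue (1 : DirichletCharacter ℂ p) hη)
  simp only [Complex.real_smul, Complex.re_ofReal_mul] at hre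
  refine (one_div_sq_mul_le_rpow_mul_tsum hη hη1).trans <|
    le_trans ?_ (Complex.re_le_norm _)
  -- keep only the terms of index `p * k + 1`
  refine hasSum_le_inj (fun k : ℕ ↦ p * k) (mul_right_injective₀ (NeZero.ne p)) (fun n _ ↦ ?_)
    (fun k ↦ ?_) ((summable_add_one_rpow hη).hasSum.mul_left _) hre
  · have : 0 ≤ ((1 : DirichletCharacter ℂ p) ((n + 1 : ℕ) : ZMod p)).re := by
      by_cases hunit : IsUnit ((n + 1 : ℕ) : ZMod p)
      · rw [MulChar.one_apply hunit, Complex.one_re]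
        exact zero_le_one
      · rw [MulChar.map_nonunit _ hunit, Complex.zero_re]
    positivity
  · have hone : (1 : DirichletCharacter ℂ p) ((p * k + 1 : ℕ) : ZMod p) = 1 := by simp
    have hp : (1 : ℝ) ≤ p := by exact_mod_cast NeZero.one_le
    rw [hone, Complex.one_re, mul_one, ← mul_rpow (by positivity) (by positivity)]
    refine rpow_le_rpow_of_nonpos (by positivity) ?_ (by linarith)
    push_cast
    linarith

end LValue

/-! ### Lower bounds for `L`-values of complex characters -/

section LValueLower

variable {p : ℕ} [NeZero p] {η : ℝ}

/-- The `3-4-1` inequality at `x = 1 / (128 * (40 * p) ^ 5)`. -/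
lemma two_mul_le_norm_lValue_of_sq_ne_one {χ : DirichletCharacter ℂ p} (hχ2 : χ ^ 2 ≠ 1) {x : ℝ}
    (hx : x = 1 / (128 * (40 * p) ^ 5)) : 2 * (40 * p) * x ≤ ‖lValue χ x‖ := by
  have hp : (1 : ℝ) ≤ p := by exact_mod_cast NeZero.one_le
  set B : ℝ := 40 * p
  have hB : 1 ≤ B := by linarith
  have hx0 : 0 < x := by rw [hx]; positivity
  have hx1 : x ≤ 1 := by
    rw [hx, div_le_one (by positivity)]
    linarith [one_le_pow₀ hB (n := 5)]
  have h341 : 1 ≤ ‖lValue (1 : DirichletCharacter ℂ p) x‖ ^ 3 * ‖lValue χ x‖ ^ 4 *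
      ‖lValue (χ ^ 2) x‖ := by
    simpa [lValue, norm_mul, norm_pow] using χ.norm_LSeries_product_ge_one hx0 0
  by_contra! hlt
  have hcancel : (2 / x) ^ 3 * (2 * B * x) ^ 4 * B = 1 := by
    rw [hx]
    field_simp
    norm_num
  have hlt_one : (2 / x) ^ 3 * ‖lValue χ x‖ ^ 4 * B < 1 := by
    rw [← hcancel]
    gcongr
  refine hlt_one.not_ge (h341.trans ?_)
  gcongr
  · exact norm_lValue_le_two_div _ hx0 hx1
  · exact (norm_lValue_le hχ2 hx0).trans (by linarith)

lemma le_norm_lValue_of_sq_ne_one {χ : DirichletCharacter ℂ p} (hχ2 : χ ^ 2 ≠ 1)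
    (hη : 0 < η) (hη1 : η ≤ 1 / (128 * (40 * p) ^ 5)) :
    1 / (128 * (40 * p) ^ 4) ≤ ‖lValue χ η‖ := by
  have hχ : χ ≠ 1 := by
    rintro rfl
    exact hχ2 (one_pow 2)
  have hp : (1 : ℝ) ≤ p := by exact_mod_cast NeZero.one_le
  have hlower := two_mul_le_norm_lValue_of_sq_ne_one hχ2 rfl
  set x : ℝ := 1 / (128 * (40 * p) ^ 5) with hx
  have hx1 : x ≤ 1 := by
    rw [hx, div_le_one (by positivity)]
    linarith [one_le_pow₀ (by linarith : (1 : ℝ) ≤ 40 * p) (n := 5)]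
  have hdiff : ‖lValue χ η - lValue χ x‖ ≤ 40 * p * x :=
    (norm_lValue_sub_lValue_le hχ hη hη1 hx1).trans (by gcongr; linarith)
  calc 1 / (128 * (40 * p) ^ 4) = 40 * p * x := by
        rw [hx]
        field_simp
    _ ≤ ‖lValue χ x‖ - ‖lValue χ η - lValue χ x‖ := by linarith
    _ ≤ ‖lValue χ η‖ := by
        rw [norm_sub_rev]
        linarith [norm_sub_norm_le (lValue χ x) (lValue χ η)]

end LValueLower

/-! ### Lower bounds for `L`-values of real characters, after Monsky -/

section MonskyWeight

variable {t : ℝ}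

lemma mul_pow_le_mul_geom_sum_sq {s : ℝ} (hs : 0 ≤ s) (n : ℕ) :
    n * s ^ n ≤ s * ∑ i ∈ range n, (s ^ 2) ^ i := by
  induction n using Nat.twoStepInduction with
  | zero => simp
  | one => simp
  | more n ih _ =>
    have hsplit : ∑ i ∈ range (n + 2), (s ^ 2) ^ i =
        s ^ 2 * ∑ i ∈ range n, (s ^ 2) ^ i + (s ^ 2) ^ (n + 1) + 1 := by
      rw [geom_sum_succ, geom_sum_succ']
      ring
    have hamgm : 2 * s ^ (n + 1) ≤ 1 + (s ^ 2) ^ (n + 1) := by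
      linarith [sq_nonneg (1 - s ^ (n + 1)), pow_right_comm s 2 (n + 1)]
    rw [hsplit]
    push_cast
    calc ((n : ℝ) + 2) * s ^ (n + 2) = s ^ 2 * (n * s ^ n) + s * (2 * s ^ (n + 1)) := by ring
      _ ≤ s ^ 2 * (s * ∑ i ∈ range n, (s ^ 2) ^ i) + s * (1 + (s ^ 2) ^ (n + 1)) := by gcongr
      _ = _ := by ring

lemma mul_pow_le_geom_sum_mul_geom_sum (ht0 : 0 < t) (ht1 : t ≤ 1) (n : ℕ) :
    n * (n + 1) * t ^ n ≤ (∑ i ∈ range n, t ^ i) * ∑ i ∈ range (n + 1), t ^ i := by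
  obtain ⟨s, hs, rfl⟩ : ∃ s : ℝ, 0 < s ∧ s ^ 2 = t := ⟨√t, by positivity, sq_sqrt ht0.le⟩
  have hs1 : s ≤ 1 := by nlinarith
  set G := ∑ i ∈ range n, (s ^ 2) ^ i
  set H := ∑ i ∈ range (n + 1), (s ^ 2) ^ i
  have hG : n * s ^ n ≤ s * G := mul_pow_le_mul_geom_sum_sq hs.le n
  have hH : (n + 1 : ℕ) * s ^ (n + 1) ≤ s * H := mul_pow_le_mul_geom_sum_sq hs.le (n + 1)
  push_cast at hH
  refine le_of_mul_le_mul_left ?_ (by positivity : 0 < s ^ 2)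
  calc s ^ 2 * (n * (n + 1) * (s ^ 2) ^ n)
      = s * ((n * s ^ n) * ((n + 1) * s ^ (n + 1))) := by ring
    _ ≤ 1 * ((n * s ^ n) * ((n + 1) * s ^ (n + 1))) := by gcongr
    _ ≤ 1 * ((s * G) * (s * H)) := by gcongr
    _ = s ^ 2 * (G * H) := by ring

/-- Monsky's decreasing weights, which compare the Lambert series `∑ χ(n) tⁿ / (1 - tⁿ)` with
`∑ χ(n) / (n (1 - t))`; the index is shifted so that `monskyWeight t n` belongs to `n + 1`. -/
noncomputable def monskyWeight (t : ℝ) (n : ℕ) : ℝ :=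
  1 / (((n : ℝ) + 1) * (1 - t)) - t ^ (n + 1) / (1 - t ^ (n + 1))

lemma monskyWeight_zero (ht : t < 1) : monskyWeight t 0 = 1 := by
  have : 1 - t ≠ 0 := by linarith
  simp only [monskyWeight, Nat.cast_zero, zero_add, one_mul, pow_one]
  field_simp

lemma geom_sum_succ_pos (ht : 0 < t) (n : ℕ) : 0 < ∑ i ∈ range (n + 1), t ^ i :=
  geom_sum_pos ht.le n.succ_ne_zero

lemma monskyWeight_eq (ht0 : 0 < t) (ht1 : t < 1) (n : ℕ) :
    monskyWeight t n =
      (1 / ((n : ℝ) + 1) - t ^ (n + 1) / ∑ i ∈ range (n + 1), t ^ i) / (1 - t) := by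
  have := geom_sum_succ_pos ht0 n
  have : 0 < 1 - t := by linarith
  rw [monskyWeight, ← mul_neg_geom_sum t (n + 1)]
  field_simp

lemma monskyWeight_nonneg (ht0 : 0 < t) (ht1 : t < 1) (n : ℕ) : 0 ≤ monskyWeight t n := by
  rw [monskyWeight_eq ht0 ht1]
  refine div_nonneg ?_ (by linarith)
  rw [sub_nonneg, div_le_div_iff₀ (geom_sum_succ_pos ht0 n) (by positivity), one_mul]
  calc t ^ (n + 1) * ((n : ℝ) + 1) = ∑ _ ∈ range (n + 1), t ^ (n + 1) := by
        rw [sum_const, card_range, nsmul_eq_mul, mul_comm, Nat.cast_succ]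
    _ ≤ _ := sum_le_sum fun i hi ↦ pow_le_pow_of_le_one ht0.le ht1.le (mem_range.1 hi).le

lemma monskyWeight_succ_le (ht0 : 0 < t) (ht1 : t < 1) (n : ℕ) :
    monskyWeight t (n + 1) ≤ monskyWeight t n := by
  have hG := geom_sum_succ_pos ht0 n
  have hH := geom_sum_succ_pos ht0 (n + 1)
  rw [monskyWeight_eq ht0 ht1, monskyWeight_eq ht0 ht1]
  have : 0 ≤ 1 - t := by linarith
  gcongr ?_ / (1 - t)
  have hGH := mul_pow_le_geom_sum_mul_geom_sum ht0 ht1.le (n + 1)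
  have hsucc : ∑ i ∈ range (n + 1 + 1), t ^ i = t * ∑ i ∈ range (n + 1), t ^ i + 1 := geom_sum_succ
  set G := ∑ i ∈ range (n + 1), t ^ i
  set H := ∑ i ∈ range (n + 1 + 1), t ^ i
  push_cast at hGH ⊢
  have hdiff : t ^ (n + 1) / G - t ^ (n + 1 + 1) / H = t ^ (n + 1) / (G * H) := by
    rw [div_sub_div _ _ hG.ne' hH.ne', hsucc]
    ring
  have hle : t ^ (n + 1) / (G * H) ≤ 1 / (((n : ℝ) + 1) * (n + 1 + 1)) := by
    rw [div_le_div_iff₀ (by positivity) (by positivity)]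
    linarith
  have htele : 1 / ((n : ℝ) + 1) - 1 / (n + 1 + 1) = 1 / ((n + 1) * (n + 1 + 1)) := by
    field_simp
    ring
  linarith

lemma norm_sum_monskyWeight_smul_le {E : Type*} [NormedAddCommGroup E] [NormedSpace ℝ E]
    {a : ℕ → E} {P : ℝ} (ha : ∀ n, ‖∑ m ∈ range n, a m‖ ≤ P) (ht0 : 0 < t) (ht1 : t < 1) (N : ℕ) :
    ‖∑ n ∈ range N, monskyWeight t n • a n‖ ≤ 3 * P := by
  have := norm_sum_smul_le_of_antitone ha (antitone_nat_of_succ_le (monskyWeight_succ_le ht0 ht1))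
    (monskyWeight_nonneg ht0 ht1) N
  rwa [monskyWeight_zero ht1, mul_one] at this

end MonskyWeight

section LambertSeries

variable {t : ℝ}

lemma summable_mul_pow_mul {f : ℕ → ℂ} (hf : ∀ n, ‖f n‖ ≤ 1) (ht0 : 0 < t) (ht1 : t < 1) :
    Summable fun c : ℕ+ × ℕ+ ↦ f c.1 * (t : ℂ) ^ (c.1 * c.2 : ℕ) := by
  have hnorm : ‖t‖ < 1 := by rwa [norm_of_nonneg ht0.le]
  refine (summable_prod_mul_pow 0 hnorm).of_norm_bounded fun c ↦ ?_
  rw [norm_mul, norm_pow, Complex.norm_real, norm_of_nonneg ht0.le, pow_zero]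
  gcongr
  exact hf _

lemma hasSum_mul_pow_div_one_sub {f : ℕ → ℂ} (hf : ∀ n, ‖f n‖ ≤ 1) (ht0 : 0 < t) (ht1 : t < 1) :
    HasSum (fun n : ℕ ↦ (t ^ (n + 1) / (1 - t ^ (n + 1))) • f (n + 1))
      (∑' c : ℕ+ × ℕ+, f c.1 * (t : ℂ) ^ (c.1 * c.2 : ℕ)) := by
  have hfiber : ∀ d : ℕ+, HasSum (fun e : ℕ+ ↦ f d * (t : ℂ) ^ (d * e : ℕ))
      ((t ^ (d : ℕ) / (1 - t ^ (d : ℕ))) • f d) := fun d ↦ by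
    have hlt : ‖(t : ℂ) ^ (d : ℕ)‖ < 1 := by
      rw [norm_pow, Complex.norm_real, norm_of_nonneg ht0.le]
      exact pow_lt_one₀ ht0.le ht1 d.ne_zero
    rw [← Equiv.pnatEquivNat.symm.hasSum_iff]
    convert! (hasSum_geometric_of_norm_lt_one hlt).mul_left (f d * (t : ℂ) ^ (d : ℕ)) using 1
    · funext e
      simp only [Function.comp_apply, Equiv.pnatEquivNat_symm_apply, Nat.succPNat_coe,
        Nat.succ_eq_add_one]
      ring
    · rw [Complex.real_smul]
      push_cast
      ring
  have hsum := (summable_mul_pow_mul hf ht0 ht1).hasSum.prod_fiberwise hfiber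
  rw [← Equiv.pnatEquivNat.symm.hasSum_iff] at hsum
  simpa only [Function.comp_def, Equiv.pnatEquivNat_symm_apply, Nat.succPNat_coe] using hsum

lemma hasSum_pow_mul_sum_divisors {f : ℕ → ℂ} (hf : ∀ n, ‖f n‖ ≤ 1) (ht0 : 0 < t) (ht1 : t < 1) :
    HasSum (fun n : ℕ ↦ (t : ℂ) ^ n * ∑ d ∈ n.divisors, f d)
      (∑' c : ℕ+ × ℕ+, f c.1 * (t : ℂ) ^ (c.1 * c.2 : ℕ)) := by
  rw [← PNat.coe_injective.hasSum_iff]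
  · refine ((sigmaAntidiagonalEquivProd.hasSum_iff.2
      (summable_mul_pow_mul hf ht0 ht1).hasSum).sigma fun n ↦ hasSum_fintype _).congr_fun
        fun n ↦ ?_
    rw [Function.comp_apply, ← Nat.sum_divisorsAntidiagonal (fun d _ ↦ f d), mul_sum, ← sum_attach]
    refine sum_congr rfl fun x _ ↦ ?_
    rw [Function.comp_apply, mul_comm]
    congr 2
    exact (divisorsAntidiagonalFactors_eq x).symm
  · intro n hn
    have hn0 : n = 0 := by
      by_contra hne
      exact hn ⟨⟨n, Nat.pos_of_ne_zero hne⟩, rfl⟩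
    rw [hn0, Nat.divisors_zero, sum_empty, mul_zero]

end LambertSeries

lemma half_le_sum_pow_sq {M : ℕ} (hM : 0 < M) :
    (M : ℝ) / 2 ≤ ∑ m ∈ Ioc 0 M, (1 - 1 / (2 * (M : ℝ) ^ 2)) ^ m ^ 2 := by
  have hM1 : (1 : ℝ) ≤ M := by exact_mod_cast hM
  have hle : 1 / (2 * (M : ℝ) ^ 2) ≤ 2 := by
    rw [div_le_iff₀ (by positivity)]
    nlinarith
  calc (M : ℝ) / 2 = ∑ _ ∈ Ioc 0 M, (1 / 2 : ℝ) := by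
        rw [sum_const, Nat.card_Ioc, nsmul_eq_mul, tsub_zero]
        ring
    _ ≤ _ := sum_le_sum fun m hm ↦ ?_
  have hmM : (m : ℝ) ≤ M := by exact_mod_cast (mem_Ioc.1 hm).2
  calc (1 / 2 : ℝ) ≤ 1 - m ^ 2 * (1 / (2 * (M : ℝ) ^ 2)) := by
        have : (m : ℝ) ^ 2 * (1 / (2 * (M : ℝ) ^ 2)) ≤ M ^ 2 * (1 / (2 * (M : ℝ) ^ 2)) := by gcongr
        have : (M : ℝ) ^ 2 * (1 / (2 * (M : ℝ) ^ 2)) = 1 / 2 := by field_simp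
        linarith
    _ ≤ _ := by
        have := one_add_mul_le_pow (a := -(1 / (2 * (M : ℝ) ^ 2))) (by linarith) (m ^ 2)
        rwa [mul_neg, ← sub_eq_add_neg, ← sub_eq_add_neg, Nat.cast_pow] at this

section RealCharacter

variable {p : ℕ} {χ : DirichletCharacter ℂ p}

lemma zetaMul_eq_sum_divisors (χ : DirichletCharacter ℂ p) (n : ℕ) :
    χ.zetaMul n = ∑ d ∈ n.divisors, χ (d : ZMod p) := by
  simp only [DirichletCharacter.zetaMul, ArithmeticFunction.coe_zeta_mul_apply]
  refine sum_congr rfl fun d hd ↦ ?_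
  simp [toArithmeticFunction, (Nat.pos_of_mem_divisors hd).ne']

open scoped ComplexOrder in
lemma one_le_zetaMul_prime_pow (hχ : χ ^ 2 = 1) {q k : ℕ} (hq : q.Prime) (hk : Even k) :
    1 ≤ χ.zetaMul (q ^ k) := by
  rw [zetaMul_eq_sum_divisors, Nat.sum_divisors_prime_pow hq]
  simp only [Nat.cast_pow, map_pow]
  rcases MulChar.isQuadratic_iff_sq_eq_one.mpr hχ q with hval | hval | hval
  · rw [hval, sum_range_succ']
    simp
  · simp [hval]
  · rw [hval, neg_one_geom_sum, if_neg (by rw [Nat.even_add_one]; exact not_not.2 hk)]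

open scoped ComplexOrder in
lemma one_le_zetaMul_sq (hχ : χ ^ 2 = 1) {m : ℕ} (hm : m ≠ 0) : 1 ≤ χ.zetaMul (m ^ 2) := by
  rw [χ.isMultiplicative_zetaMul.multiplicative_factorization _ (pow_ne_zero 2 hm)]
  refine prod_induction _ (1 ≤ ·) (fun _ _ ↦ one_le_mul_of_one_le_of_one_le) le_rfl
    fun q hq ↦ one_le_zetaMul_prime_pow hχ (Nat.prime_of_mem_primeFactors hq) ?_
  simp [Nat.factorization_pow]

lemma sum_pow_sq_le_norm_tsum (hχ : χ ^ 2 = 1) {t : ℝ} (ht0 : 0 < t) (ht1 : t < 1) (M : ℕ) :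
    ∑ m ∈ Ioc 0 M, t ^ m ^ 2 ≤
      ‖∑' c : ℕ+ × ℕ+, χ ((c.1 : ℕ) : ZMod p) * (t : ℂ) ^ (c.1 * c.2 : ℕ)‖ := by
  have hsum := Complex.hasSum_re (hasSum_pow_mul_sum_divisors (f := fun n ↦ χ (n : ZMod p))
    (fun n ↦ χ.norm_le_one _) ht0 ht1)
  simp only [← zetaMul_eq_sum_divisors, ← Complex.ofReal_pow, Complex.re_ofReal_mul] at hsum ⊢
  refine le_trans ?_ (Complex.re_le_norm _)
  calc ∑ m ∈ Ioc 0 M, t ^ m ^ 2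
      ≤ ∑ m ∈ Ioc 0 M, t ^ m ^ 2 * (χ.zetaMul (m ^ 2)).re := by
        refine sum_le_sum fun m hm ↦ le_mul_of_one_le_right (by positivity) ?_
        exact (Complex.le_def.1 (one_le_zetaMul_sq hχ (mem_Ioc.1 hm).1.ne')).1
    _ = ∑ n ∈ (Ioc 0 M).image (· ^ 2), t ^ n * (χ.zetaMul n).re := by
        rw [sum_image (Nat.pow_left_injective two_ne_zero).injOn]
    _ ≤ _ := sum_le_hasSum _ (fun n _ ↦ mul_nonneg (by positivity)
        (Complex.le_def.1 (DirichletCharacter.zetaMul_nonneg hχ n)).1) hsum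

variable [NeZero p]

lemma sum_pow_sq_le_norm_lValue (hχ : χ ≠ 1) (hχ2 : χ ^ 2 = 1) {t η : ℝ} (ht0 : 0 < t)
    (ht1 : t < 1) (hη : 0 < η) (hη1 : η ≤ 1) (M : ℕ) :
    ∑ m ∈ Ioc 0 M, t ^ m ^ 2 ≤ (‖lValue χ η‖ + 40 * p * η) / (1 - t) + 3 * p := by
  refine (sum_pow_sq_le_norm_tsum hχ2 ht0 ht1 M).trans ?_
  set a : ℕ → ℂ := fun n ↦ χ ((n + 1 : ℕ) : ZMod p)
  have ha : ∀ n, ‖∑ m ∈ range n, a m‖ ≤ p := norm_sum_range_add_one_le hχ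
  have hlambert := hasSum_mul_pow_div_one_sub (f := fun n ↦ χ (n : ZMod p))
    (fun n ↦ χ.norm_le_one _) ht0 ht1
  refine le_of_tendsto_of_tendsto' hlambert.tendsto_sum_nat.norm
    ((((hasSum_lValue χ hη).tendsto_sum_nat.norm.add_const _).div_const _).add_const _) fun N ↦ ?_
  have hsplit : ∑ n ∈ range N, (t ^ (n + 1) / (1 - t ^ (n + 1))) • a n =
      (1 - t)⁻¹ • (∑ n ∈ range N, ((n : ℝ) + 1) ^ (-(1 + η)) • a n +
        ∑ n ∈ range N, (((n : ℝ) + 1) ^ (-(1 + 0) : ℝ) - ((n : ℝ) + 1) ^ (-(1 + η))) • a n) -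
      ∑ n ∈ range N, monskyWeight t n • a n := by
    rw [← sum_add_distrib, smul_sum, ← sum_sub_distrib]
    refine sum_congr rfl fun n _ ↦ ?_
    rw [← add_smul, smul_smul, ← sub_smul, monskyWeight, add_sub_cancel, add_zero, rpow_neg_one]
    congr 1
    field_simp
    ring
  rw [hsplit]
  refine (norm_sub_le _ _).trans (add_le_add ?_ (norm_sum_monskyWeight_smul_le ha ht0 ht1 N))
  rw [norm_smul, norm_inv, norm_of_nonneg (by linarith), inv_mul_eq_div]
  have := norm_sum_add_one_rpow_sub_smul_le ha le_rfl hη.le hη1 N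
  rw [sub_zero] at this
  have : 0 ≤ 1 - t := by linarith
  gcongr
  exact (norm_add_le _ _).trans (by gcongr)

lemma le_norm_lValue_of_sq_eq_one (hχ : χ ≠ 1) (hχ2 : χ ^ 2 = 1) {η : ℝ} (hη : 0 < η)
    (hη1 : η ≤ 1) : 1 / (128 * (p : ℝ)) - 40 * p * η ≤ ‖lValue χ η‖ := by
  have hp : (1 : ℝ) ≤ p := by exact_mod_cast NeZero.one_le
  set K : ℝ := 128 * (p : ℝ) ^ 2
  have hK : 1 < K := by nlinarith
  have hKinv : 1 / K < 1 := by rwa [div_lt_one (by linarith)]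
  have hKpos : 0 < 1 / K := by positivity
  have hlower : ((8 * p : ℕ) : ℝ) / 2 ≤ ∑ m ∈ Ioc 0 (8 * p), (1 - 1 / K) ^ m ^ 2 := by
    have hsq : K = 2 * ((8 * p : ℕ) : ℝ) ^ 2 := by
      push_cast
      ring
    rw [hsq]
    exact half_le_sum_pow_sq (by linarith [NeZero.pos p])
  have hupper := sum_pow_sq_le_norm_lValue hχ hχ2 (sub_pos.2 hKinv) (by linarith) hη hη1 (8 * p)
  rw [sub_sub_cancel, div_div_eq_mul_div, div_one] at hupper
  have hmain : (p : ℝ) ≤ (‖lValue χ η‖ + 40 * p * η) * K := by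
    push_cast at hlower
    linarith
  rw [sub_le_iff_le_add]
  refine le_of_mul_le_mul_right ?_ (by linarith : 0 < K)
  refine le_trans (le_of_eq ?_) hmain
  field_simp
  rfl

end RealCharacter

lemma le_norm_lValue {p : ℕ} [NeZero p] {χ : DirichletCharacter ℂ p} (hχ : χ ≠ 1) {η : ℝ}
    (hη : 0 < η) (hη1 : η ≤ 1 / (128 * (40 * p) ^ 5)) :
    1 / (128 * (40 * p) ^ 4) ≤ ‖lValue χ η‖ := by
  by_cases hχ2 : χ ^ 2 = 1
  · have hp : (1 : ℝ) ≤ p := by exact_mod_cast NeZero.one_le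
    have hle_one : η ≤ 1 := by
      refine hη1.trans ?_
      rw [div_le_one (by positivity)]
      linarith [one_le_pow₀ (by linarith : (1 : ℝ) ≤ 40 * p) (n := 5)]
    refine le_trans ?_ (le_norm_lValue_of_sq_eq_one hχ hχ2 hη hle_one)
    have hsmall : 40 * p * η ≤ 1 / (128 * (40 * p) ^ 4) := by
      calc 40 * p * η ≤ 40 * p * (1 / (128 * (40 * p) ^ 5)) := by gcongr
        _ = _ := by field_simp
    have hhalf : 2 * (1 / (128 * (40 * p) ^ 4)) ≤ 1 / (128 * (p : ℝ)) := by
      rw [mul_one_div, div_le_div_iff₀ (by positivity) (by positivity)]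
      have := one_le_pow₀ hp (n := 3)
      nlinarith
    linarith
  · exact le_norm_lValue_of_sq_ne_one hχ2 hη hη1

/-! ### Primes congruent to `1` modulo `p`: lower bound -/

section PrimesOneModLower

variable {p : ℕ} {η : ℝ}

/-- The prime zeta value `P(2) = ∑ q⁻²`, which bounds the contribution of the proper prime powers
to `log |L(1 + η, χ)|`. -/
noncomputable def primeZetaTwo : ℝ := ∑' q : Nat.Primes, (q : ℝ) ^ (-2 : ℝ)

lemma summable_primes_rpow_neg_two : Summable fun q : Nat.Primes ↦ (q : ℝ) ^ (-2 : ℝ) :=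
  Nat.Primes.summable_rpow.2 (by norm_num)

lemma re_neg_log_one_sub_le {z : ℂ} (hz : ‖z‖ ≤ 1 / 2) :
    (-Complex.log (1 - z)).re ≤ z.re + ‖z‖ ^ 2 := by
  have htaylor := Complex.norm_log_one_add_sub_self_le (z := -z) (by rw [norm_neg]; linarith)
  rw [norm_neg, ← sub_eq_add_neg, sub_neg_eq_add] at htaylor
  have hquad : ‖z‖ ^ 2 * (1 - ‖z‖)⁻¹ / 2 ≤ ‖z‖ ^ 2 := by
    have hinv : (1 - ‖z‖)⁻¹ ≤ 2 := by
      rw [inv_le_comm₀ (by linarith) (by norm_num)]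
      linarith
    nlinarith [sq_nonneg ‖z‖]
  have hre := neg_le_of_abs_le ((Complex.abs_re_le_norm _).trans (htaylor.trans hquad))
  rw [Complex.add_re] at hre
  rw [Complex.neg_re]
  linarith

lemma re_neg_log_eulerFactor_le (χ : DirichletCharacter ℂ p) (hη : 0 < η) (q : Nat.Primes) :
    (-Complex.log (1 - χ q * (q : ℂ) ^ (-(1 + (η : ℂ))))).re ≤
      (χ q).re * (q : ℝ) ^ (-(1 + η)) + (q : ℝ) ^ (-2 : ℝ) := by
  have hq : (2 : ℝ) ≤ q := by exact_mod_cast q.2.two_le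
  have hcast : (q : ℂ) ^ (-(1 + (η : ℂ))) = (((q : ℝ) ^ (-(1 + η)) : ℝ) : ℂ) := by
    rw [Complex.ofReal_cpow (by positivity)]
    push_cast
    rfl
  have hnorm : ‖χ q * (((q : ℝ) ^ (-(1 + η)) : ℝ) : ℂ)‖ ≤ (q : ℝ)⁻¹ := by
    rw [norm_mul, Complex.norm_real, norm_of_nonneg (by positivity), ← rpow_neg_one]
    refine (mul_le_of_le_one_left (by positivity) (χ.norm_le_one _)).trans ?_
    gcongr <;> linarith
  rw [hcast]
  refine (re_neg_log_one_sub_le (hnorm.trans ?_)).trans ?_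
  · rw [one_div]
    gcongr
  · rw [Complex.re_mul_ofReal, rpow_neg (y := 2) (by positivity), rpow_two, ← inv_pow]
    gcongr

lemma hasSum_log_norm_lValue (χ : DirichletCharacter ℂ p) (hη : 0 < η) :
    HasSum (fun q : Nat.Primes ↦ (-Complex.log (1 - χ q * (q : ℂ) ^ (-(1 + (η : ℂ))))).re)
      (log ‖lValue χ η‖) := by
  have hs : 1 < (1 + (η : ℂ)).re := by simpa using hη
  rw [lValue, ← DirichletCharacter.LSeries_eulerProduct_exp_log χ hs, Complex.norm_exp, log_exp]
  exact Complex.hasSum_re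
    (DirichletCharacter.summable_neg_log_one_sub_mul_prime_cpow χ hs).hasSum

lemma summable_primes_modEq_one_rpow (p : ℕ) (hη : 0 < η) :
    Summable fun q : Nat.Primes ↦ if (q : ℕ) ≡ 1 [MOD p] then (q : ℝ) ^ (-(1 + η)) else 0 :=
  (summable_primes_rpow_neg (by linarith : 1 < 1 + η)).of_nonneg_of_le
    (fun _ ↦ by positivity) fun _ ↦ by
    split_ifs
    · exact le_rfl
    · positivity

lemma card_dirichletCharacter [NeZero p] : #(univ : Finset (DirichletCharacter ℂ p)) = φ p := by
  rw [card_univ, ← Nat.card_eq_fintype_card]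
  exact DirichletCharacter.card_eq_totient_of_hasEnoughRootsOfUnity ℂ p

lemma sum_re_character_eq [NeZero p] (q : ℕ) :
    ∑ χ : DirichletCharacter ℂ p, (χ q).re = if q ≡ 1 [MOD p] then (φ p : ℝ) else 0 := by
  rw [← Complex.re_sum, DirichletCharacter.sum_characters_eq ℂ]
  simp only [← ZMod.natCast_eq_natCast_iff, Nat.cast_one]
  split_ifs <;> simp

lemma sum_log_norm_lValue_le [NeZero p] (hη : 0 < η) :
    ∑ χ : DirichletCharacter ℂ p, log ‖lValue χ η‖ ≤
      φ p * ((∑' q : Nat.Primes, if (q : ℕ) ≡ 1 [MOD p] then (q : ℝ) ^ (-(1 + η)) else 0) +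
        primeZetaTwo) := by
  refine hasSum_le (fun q ↦ ?_) (hasSum_sum fun χ _ ↦ hasSum_log_norm_lValue χ hη)
    (((summable_primes_modEq_one_rpow p hη).hasSum.add
      summable_primes_rpow_neg_two.hasSum).mul_left _)
  refine (sum_le_sum fun χ _ ↦ re_neg_log_eulerFactor_le χ hη q).trans_eq ?_
  rw [sum_add_distrib, sum_const, card_dirichletCharacter, ← sum_mul, sum_re_character_eq,
    nsmul_eq_mul, mul_add, ite_mul, mul_ite, zero_mul, mul_zero]

lemma tsum_primes_modEq_one_rpow_le (hη : 0 < η) {N : ℕ} (hN : 0 < N) :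
    (∑' q : Nat.Primes, if (q : ℕ) ≡ 1 [MOD p] then (q : ℝ) ^ (-(1 + η)) else 0) ≤
      (∑ q ∈ primesOneMod p N, 1 / (q : ℝ)) + (N : ℝ) ^ (-η) / η := by
  set g : ℕ → ℝ := fun n ↦ if n.Prime ∧ n ≡ 1 [MOD p] then (n : ℝ) ^ (-(1 + η)) else 0
  have hg_nonneg (n : ℕ) : 0 ≤ g n := by positivity
  have hg_le (n : ℕ) : g n ≤ (n : ℝ) ^ (-(1 + η)) := by
    simp only [g]
    split_ifs
    · exact le_rfl
    · positivity
  have hg : Summable g :=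
    (summable_nat_rpow.2 (by linarith)).of_nonneg_of_le hg_nonneg hg_le
  have hhead : ∑ n ∈ range (N + 1), g n ≤ ∑ q ∈ primesOneMod p N, 1 / (q : ℝ) := by
    have hset : {n ∈ range (N + 1) | n.Prime ∧ n ≡ 1 [MOD p]} = primesOneMod p N := by
      ext q
      rw [mem_primesOneMod, mem_filter, mem_range, Nat.lt_succ_iff, and_assoc]
    simp only [g]
    rw [← sum_filter, hset]
    exact sum_le_sum fun q hq ↦
      rpow_neg_le_one_div (prime_of_mem_primesOneMod hq).two_le (by linarith)
  have htail : ∑' n, g (n + (N + 1)) ≤ (N : ℝ) ^ (-η) / η := by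
    have hNpos : (0 : ℝ) < N := by exact_mod_cast hN
    refine le_trans (Summable.tsum_le_tsum (fun n ↦ ?_) ((summable_nat_add_iff (N + 1)).2 hg)
      (summable_add_add_one_rpow hη hNpos)) (tsum_add_add_one_rpow_le hη hNpos)
    refine (hg_le _).trans_eq ?_
    push_cast
    ring_nf
  calc _ = ∑' q : Nat.Primes, g q := tsum_congr fun q ↦ by
        simp only [g, show (q : ℕ).Prime from q.2, true_and]
    _ ≤ ∑' n, g n := tsum_comp_le_tsum_of_inj hg hg_nonneg Subtype.val_injective
    _ = _ := (hg.sum_add_tsum_nat_add (N + 1)).symm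
    _ ≤ _ := add_le_add hhead htail

lemma rpow_neg_div_le_one (hη : 0 < η) {x : ℝ} (hx : 0 < x) (hηx : 1 / η ^ 2 ≤ log x) :
    x ^ (-η) / η ≤ 1 := by
  have hexp : 1 / η ≤ log x * η := by
    rw [show 1 / η = 1 / η ^ 2 * η by field_simp]
    gcongr
  rw [div_le_one hη, rpow_def_of_pos hx, mul_neg, exp_neg, inv_le_comm₀ (exp_pos _) hη, ← one_div]
  linarith [add_one_le_exp (log x * η)]

lemma neg_log_le_log_norm_lValue [NeZero p] {χ : DirichletCharacter ℂ p} (hχ : χ ≠ 1)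
    (hη : 0 < η) (hη1 : η ≤ 1 / (128 * (40 * p) ^ 5)) :
    -log (128 * (40 * p) ^ 4) ≤ log ‖lValue χ η‖ := by
  have hp := NeZero.pos p
  rw [← log_inv, ← one_div]
  exact log_le_log (by positivity) (le_norm_lValue hχ hη hη1)

lemma log_one_div_sub_le_log_norm_lValue_one [NeZero p] (hη : 0 < η) (hη1 : η ≤ 1) :
    log (1 / η) - log (128 * (40 * p) ^ 4) ≤ log ‖lValue (1 : DirichletCharacter ℂ p) η‖ := by
  have hp : (1 : ℝ) ≤ p := by exact_mod_cast NeZero.one_le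
  rw [← log_div (by positivity) (by positivity)]
  refine log_le_log (by positivity) (le_trans ?_ (one_div_sq_mul_le_norm_lValue_one hη hη1))
  rw [div_div, mul_comm η]
  gcongr
  nlinarith [one_le_pow₀ hp (n := 2)]

lemma log_one_div_sub_le_sum_log_norm_lValue [NeZero p] (hη : 0 < η)
    (hη1 : η ≤ 1 / (128 * (40 * p) ^ 5)) :
    log (1 / η) - φ p * log (128 * (40 * p) ^ 4) ≤
      ∑ χ : DirichletCharacter ℂ p, log ‖lValue χ η‖ := by
  classical
  have hp : (1 : ℝ) ≤ p := by exact_mod_cast NeZero.one_le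
  have hle_one : η ≤ 1 := by
    refine hη1.trans ?_
    rw [div_le_one (by positivity)]
    linarith [one_le_pow₀ (by linarith : (1 : ℝ) ≤ 40 * p) (n := 5)]
  calc log (1 / η) - φ p * log (128 * (40 * p) ^ 4)
      = ∑ χ : DirichletCharacter ℂ p,
          ((if χ = 1 then log (1 / η) else 0) - log (128 * (40 * p) ^ 4)) := by
        rw [sum_sub_distrib, sum_ite_eq' univ, if_pos (mem_univ _), sum_const,
          card_dirichletCharacter, nsmul_eq_mul]
    _ ≤ _ := by
        refine sum_le_sum fun χ _ ↦ ?_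
        split_ifs with hχ
        · rw [hχ]
          exact log_one_div_sub_le_log_norm_lValue_one hη hle_one
        · rw [zero_sub]
          exact neg_log_le_log_norm_lValue hχ hη hη1

lemma log_one_div_div_sub_le_sum_primesOneMod [NeZero p] (hη : 0 < η)
    (hη1 : η ≤ 1 / (128 * (40 * p) ^ 5)) {N : ℕ} (hN : 1 / η ^ 2 ≤ log N) :
    log (1 / η) / φ p - log (128 * (40 * p) ^ 4) - 1 - primeZetaTwo ≤
      ∑ q ∈ primesOneMod p N, 1 / (q : ℝ) := by
  have hN0 : 0 < N := by
    by_contra! hle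
    obtain rfl : N = 0 := by lia
    have : 0 < 1 / η ^ 2 := by positivity
    simp only [CharP.cast_eq_zero, log_zero] at hN
    linarith
  have hφ : (0 : ℝ) < φ p := by exact_mod_cast Nat.totient_pos.2 (NeZero.pos p)
  have hsum := (log_one_div_sub_le_sum_log_norm_lValue hη hη1).trans (sum_log_norm_lValue_le hη)
  have htail := (tsum_primes_modEq_one_rpow_le (p := p) hη hN0).trans (add_le_add_right
    (rpow_neg_div_le_one hη (by exact_mod_cast hN0) hN) _)
  have hdiv : log (1 / η) / φ p ≤ log (128 * (40 * p) ^ 4) +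
      ((∑' q : Nat.Primes, if (q : ℕ) ≡ 1 [MOD p] then (q : ℝ) ^ (-(1 + η)) else 0) +
        primeZetaTwo) := by
    rw [div_le_iff₀ hφ]
    linarith
  linarith

end PrimesOneModLower

/-! ### Upper bound for the number of cyclic numbers -/

lemma cyclicCount_le_roughCount_add_sum (N y : ℕ) :
    cyclicCount N ≤ roughCount N y +
      ∑ p ∈ y.primesLE, #{m ∈ Ioc 0 (N / p) | ∀ q ∈ primesOneMod p (N / p), ¬ q ∣ m} := by
  classical
  rw [cyclicCount_natCast]
  have hsub : {n ∈ Ioc 0 N | IsCyclicNum n} ⊆ {n ∈ Ioc 0 N | (primorial y).Coprime n} ∪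
      y.primesLE.biUnion fun p ↦
        {m ∈ Ioc 0 (N / p) | ∀ q ∈ primesOneMod p (N / p), ¬ q ∣ m}.image (p * ·) := by
    intro n hn
    obtain ⟨hnN, hcyc⟩ := mem_filter.1 hn
    rw [mem_union, mem_filter]
    by_cases hcop : (primorial y).Coprime n
    · exact Or.inl ⟨hnN, hcop⟩
    · rw [coprime_primorial_iff] at hcop
      push Not at hcop
      obtain ⟨p, hpy, m, rfl⟩ := hcop
      have hp := (Nat.mem_primesLE.1 hpy).2
      obtain ⟨hpm, hpmN⟩ := mem_Ioc.1 hnN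
      refine Or.inr <| mem_biUnion.2 ⟨p, hpy, mem_image.2 ⟨m, mem_filter.2
        ⟨mem_Ioc.2 ⟨Nat.pos_of_mul_pos_left hpm, ?_⟩, fun q hq hqm ↦ ?_⟩, rfl⟩⟩
      · rwa [Nat.le_div_iff_mul_le hp.pos, mul_comm]
      · exact not_dvd_of_isCyclicNum hcyc hp (dvd_mul_right p m) (prime_of_mem_primesOneMod hq)
          (mem_primesOneMod.1 hq).2 (hqm.mul_left p)
  exact (card_le_card hsub).trans <| (card_union_le _ _).trans <| add_le_add_right
    (card_biUnion_le.trans <| sum_le_sum fun p _ ↦ card_image_le) _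

lemma cyclicCount_le_of_le_sum_primesOneMod {N y : ℕ} {σ : ℝ} (hσ : 0 < σ)
    (h : ∀ p ∈ y.primesLE, σ / p ≤ ∑ q ∈ primesOneMod p (N / p), 1 / (q : ℝ)) :
    (cyclicCount N : ℝ) ≤ roughCount N y + 3 * N * y / σ := by
  have hterm : ∀ p ∈ y.primesLE,
      (#{m ∈ Ioc 0 (N / p) | ∀ q ∈ primesOneMod p (N / p), ¬ q ∣ m} : ℝ) ≤ 3 * N / σ := by
    intro p hp
    have hp0 : (0 : ℝ) < p := by exact_mod_cast (Nat.mem_primesLE.1 hp).2.pos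
    refine (card_filter_forall_not_dvd_le (filter_subset _ _)
      ((by positivity : 0 < σ / p).trans_le (h p hp))).trans ?_
    calc _ ≤ 3 * ((N : ℝ) / p) / (σ / p) := by
          gcongr
          exacts [Nat.cast_div_le, h p hp]
      _ = 3 * N / σ := by field_simp
  have hcard : (#y.primesLE : ℝ) ≤ y := by
    have : #y.primesLE ≤ #(Ioc 0 y) := card_le_card fun p hp ↦
      mem_Ioc.2 ⟨(Nat.mem_primesLE.1 hp).2.pos, (Nat.mem_primesLE.1 hp).1⟩
    exact_mod_cast this.trans_eq (Nat.card_Ioc 0 y)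
  calc (cyclicCount N : ℝ) ≤ roughCount N y + ∑ p ∈ y.primesLE,
        (#{m ∈ Ioc 0 (N / p) | ∀ q ∈ primesOneMod p (N / p), ¬ q ∣ m} : ℝ) := by
        exact_mod_cast cyclicCount_le_roughCount_add_sum N y
    _ ≤ roughCount N y + #y.primesLE * (3 * N / σ) := by
        rw [← nsmul_eq_mul]
        gcongr
        exact sum_le_card_nsmul _ _ _ hterm
    _ ≤ roughCount N y + y * (3 * N / σ) := by gcongr
    _ = _ := by ring

lemma log_div_four_le_log_natDiv {N p : ℕ} (hp : 0 < p) (hN : 4 ≤ log N)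
    (hpN : 2 * log p ≤ log N) : log N / 4 ≤ log (N / p : ℕ) := by
  have hp0 : (0 : ℝ) < p := by exact_mod_cast hp
  have hN0 : (0 : ℝ) < N := Nat.cast_pos.2 <| Nat.pos_of_ne_zero <| by
    rintro rfl
    norm_num at hN
  have hhalf : exp (log N / 4) * exp (log N / 4) ≤ N / p := by
    rw [← exp_add, ← exp_log (div_pos hN0 hp0), log_div hN0.ne' hp0.ne']
    gcongr
    linarith
  have hfloor : (N : ℝ) / p < (N / p : ℕ) + 1 := by
    rw [← Nat.floor_div_eq_div (K := ℝ)]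
    exact Nat.lt_floor_add_one _
  have hquarter := add_one_le_exp (log N / 4)
  have hexp : exp (log N / 4) ≤ (N / p : ℕ) := by nlinarith
  rwa [le_log_iff_exp_le ((exp_pos _).trans_le hexp)]

lemma eventually_const_mul_rpow_le_exp (C a : ℝ) :
    ∀ᶠ x : ℝ in atTop, C * x ^ a ≤ exp x := by
  filter_upwards [((isLittleO_rpow_exp_pos_mul_atTop a one_pos).const_mul_left C).bound
    one_pos] with x hx
  rw [one_mul, one_mul, norm_eq_abs, norm_of_nonneg (exp_pos x).le] at hx
  exact (le_abs_self _).trans hx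

lemma eventually_const_mul_log_add_le_rpow (C D : ℝ) {ε : ℝ} (hε : 0 < ε) :
    ∀ᶠ x : ℝ in atTop, C * log x + D ≤ x ^ ε := by
  have hconst : (fun _ : ℝ ↦ D) =o[atTop] fun x : ℝ ↦ x ^ ε :=
    isLittleO_const_left.2 (Or.inr (tendsto_abs_atTop_atTop.comp (tendsto_rpow_atTop hε)))
  filter_upwards [(((isLittleO_log_rpow_atTop hε).const_mul_left C).add hconst).bound one_pos,
    eventually_ge_atTop 0] with x hx hx0
  rw [one_mul, norm_eq_abs, norm_of_nonneg (by positivity)] at hx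
  exact (le_abs_self _).trans hx

lemma log_log_div_sub_le_sum_primesOneMod {N p : ℕ} (hp : 0 < p) (hN : 10 ≤ log (log N))
    (hpN : (p : ℝ) ≤ log (log N)) (hbig : 4 * (128 * (40 * log (log N)) ^ 5) ^ 2 ≤ log N) :
    3 / 8 * (log (log N) / p) - log (128 * (40 * p) ^ 4) - 1 - primeZetaTwo ≤
      ∑ q ∈ primesOneMod p (N / p), 1 / (q : ℝ) := by
  have : NeZero p := ⟨hp.ne'⟩
  have hp0 : (0 : ℝ) < p := by exact_mod_cast hp
  have : (0 : ℝ) < φ p := by exact_mod_cast Nat.totient_pos.2 hp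
  have hφ : (φ p : ℝ) ≤ p := by exact_mod_cast p.totient_le
  set L := log N
  have hL : 4 ≤ L := by nlinarith [one_le_pow₀ (by linarith : 1 ≤ 40 * log L) (n := 5)]
  have hpL : 2 * log p ≤ L := by
    have hloglog := log_le_sub_one_of_pos (by linarith : 0 < log L)
    have hlogp := log_le_log hp0 hpN
    have hquad := quadratic_le_exp_of_nonneg (by linarith : 0 ≤ log L)
    rw [exp_log (by linarith)] at hquad
    nlinarith
  have hη2 : 1 / (1 / √(L / 4)) ^ 2 = L / 4 := by
    rw [div_pow, one_pow, one_div_one_div, sq_sqrt (by linarith)]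
  have hη : 1 / √(L / 4) ≤ 1 / (128 * (40 * p) ^ 5) := by
    refine one_div_le_one_div_of_le (by positivity) (le_sqrt_of_sq_le ?_)
    calc (128 * (40 * (p : ℝ)) ^ 5) ^ 2 ≤ (128 * (40 * log L) ^ 5) ^ 2 := by gcongr
      _ ≤ L / 4 := by linarith
  have hsum := log_one_div_div_sub_le_sum_primesOneMod (by positivity) hη
    (hη2.trans_le (log_div_four_le_log_natDiv hp hL hpL))
  have hlog : 3 / 8 * log L ≤ log (1 / (1 / √(L / 4))) := by
    have hlog2 : log 4 = 2 * log 2 := by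
      rw [show (4 : ℝ) = 2 ^ 2 by norm_num, log_pow, Nat.cast_ofNat]
    rw [one_div_one_div, log_sqrt (by linarith), log_div (by linarith) (by norm_num)]
    linarith [log_two_lt_d9]
  have : 3 / 8 * (log L / p) ≤ log (1 / (1 / √(L / 4))) / φ p := by
    rw [← mul_div_assoc]
    gcongr
    linarith
  linarith

lemma eventually_div_le_sum_primesOneMod {a : ℝ} (ha : a < 1) :
    ∀ᶠ N : ℕ in atTop, ∀ p : ℕ, 0 < p → (p : ℝ) ≤ log (log N) ^ a →
      log (log N) / 8 / p ≤ ∑ q ∈ primesOneMod p (N / p), 1 / (q : ℝ) := by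
  have hL := tendsto_log_atTop.comp (tendsto_natCast_atTop_atTop (R := ℝ))
  have hLL := tendsto_log_atTop.comp hL
  filter_upwards [hLL.eventually (eventually_const_mul_rpow_le_exp (4 * (128 * 40 ^ 5) ^ 2) 10),
    hLL.eventually (eventually_const_mul_log_add_le_rpow 16
      (4 * (log (128 * 40 ^ 4) + 1 + primeZetaTwo)) (sub_pos.2 ha)),
    hLL.eventually_ge_atTop 10, hL.eventually_gt_atTop 0] with N hbig hmain hx hL0 p hp hpx
  simp only [Function.comp_apply] at hbig hmain hx hL0
  have hp0 : (0 : ℝ) < p := by exact_mod_cast hp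
  have hx0 : 0 < log (log N) := by linarith
  have hple : (p : ℝ) ≤ log (log N) :=
    hpx.trans (rpow_le_self_of_one_le (by linarith) (by linarith))
  rw [exp_log hL0, rpow_ofNat] at hbig
  have hsum := log_log_div_sub_le_sum_primesOneMod hp hx hple (by linarith)
  have hlog : log (128 * (40 * p) ^ 4) ≤ log (128 * 40 ^ 4) + 4 * log (log (log N)) := by
    rw [mul_pow, ← mul_assoc, log_mul (by positivity) (by positivity), log_pow, Nat.cast_ofNat]
    gcongr
  have hxa : log (log N) ^ (1 - a) ≤ log (log N) / p := by
    rw [le_div_iff₀ hp0]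
    calc log (log N) ^ (1 - a) * p ≤ log (log N) ^ (1 - a) * log (log N) ^ a := by gcongr
      _ = log (log N) := by rw [← rpow_add hx0, sub_add_cancel, rpow_one]
  rw [div_right_comm]
  linarith

/-! ### The asymptotic density of the cyclic numbers -/

section CyclicDensity

lemma tendsto_log_natCast : Tendsto (fun N : ℕ ↦ log N) atTop atTop :=
  tendsto_log_atTop.comp tendsto_natCast_atTop_atTop

lemma tendsto_log_log_natCast : Tendsto (fun N : ℕ ↦ log (log N)) atTop atTop :=
  tendsto_log_atTop.comp tendsto_log_natCast

lemma tendsto_log_log_log_natCast : Tendsto (fun N : ℕ ↦ log (log (log N))) atTop atTop :=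
  tendsto_log_atTop.comp tendsto_log_log_natCast

variable {a : ℝ}

lemma tendsto_prod_primesLE_floor_rpow_mul_log (ha : 0 < a) :
    Tendsto (fun x : ℝ ↦ (∏ p ∈ ⌊x ^ a⌋₊.primesLE, (1 - 1 / (p : ℝ))) * log x) atTop
      (𝓝 (exp (-eulerMascheroniConstant) / a)) := by
  refine ((tendsto_prod_primesLE_one_sub_mul_log.comp (tendsto_rpow_atTop ha)).div_const a).congr'
    ?_
  filter_upwards [eventually_gt_atTop 0] with x hx
  simp only [Function.comp_apply]
  rw [log_rpow hx]
  field_simp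

lemma four_pow_floor_le_exp {x : ℝ} (hx : 0 ≤ x) : (4 : ℝ) ^ ⌊x⌋₊ ≤ exp (2 * x) := by
  have hfour : (4 : ℝ) ≤ exp 2 := by
    linarith [quadratic_le_exp_of_nonneg (by norm_num : (0 : ℝ) ≤ 2)]
  calc (4 : ℝ) ^ ⌊x⌋₊ ≤ exp 2 ^ ⌊x⌋₊ := by gcongr
    _ = exp (2 * ⌊x⌋₊) := by rw [← exp_nat_mul, mul_comm]
    _ ≤ _ := by
      gcongr
      exact Nat.floor_le hx

lemma tendsto_four_pow_floor_rpow_mul_log_div (a : ℝ) :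
    Tendsto (fun x : ℝ ↦ 4 ^ ⌊x ^ a⌋₊ * log x / exp (exp x)) atTop (𝓝 0) := by
  refine squeeze_zero' ?_ ?_ tendsto_exp_neg_atTop_nhds_zero
  · filter_upwards [eventually_ge_atTop 1] with x hx
    have := log_nonneg hx
    positivity
  · filter_upwards [eventually_const_mul_rpow_le_exp 4 a, eventually_const_mul_rpow_le_exp 4 1,
      eventually_ge_atTop 1] with x hxa hx1 hx
    rw [rpow_one] at hx1
    have := log_nonneg hx
    have hlog : log x ≤ exp x := by
      linarith [log_le_sub_one_of_pos (by linarith : 0 < x), add_one_le_exp x]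
    rw [div_le_iff₀ (exp_pos _), ← exp_add]
    calc 4 ^ ⌊x ^ a⌋₊ * log x ≤ exp (2 * x ^ a) * exp x := by
          gcongr
          exact four_pow_floor_le_exp (by positivity)
      _ ≤ _ := by
          rw [← exp_add]
          exact exp_le_exp.2 (by linarith)

lemma tendsto_roughCount_mul_log_log_log_div (ha : 0 < a) :
    Tendsto (fun N : ℕ ↦ roughCount N ⌊log (log N) ^ a⌋₊ * log (log (log N)) / N) atTop
      (𝓝 (exp (-eulerMascheroniConstant) / a)) := by
  refine ((tendsto_prod_primesLE_floor_rpow_mul_log ha).comp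
    tendsto_log_log_natCast).congr_dist ?_
  refine squeeze_zero' (Eventually.of_forall fun _ ↦ dist_nonneg) ?_
    ((tendsto_four_pow_floor_rpow_mul_log_div a).comp tendsto_log_log_natCast)
  filter_upwards [tendsto_log_natCast.eventually_gt_atTop 0,
    tendsto_log_log_log_natCast.eventually_ge_atTop 0, eventually_gt_atTop 0] with N hL hlll hN
  have hN0 : (0 : ℝ) < N := by exact_mod_cast hN
  simp only [Function.comp_apply]
  rw [exp_log hL, exp_log hN0, dist_comm, dist_eq, mul_div_right_comm, ← sub_mul, abs_mul,
    abs_of_nonneg hlll, mul_div_right_comm]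
  gcongr
  rw [le_div_iff₀ hN0, ← abs_of_pos hN0, ← abs_mul, abs_of_pos hN0, sub_mul,
    div_mul_cancel₀ _ hN0.ne', mul_comm _ (N : ℝ)]
  exact abs_roughCount_sub_le N _

lemma tendsto_log_pow_div_rpow {ε : ℝ} (hε : 0 < ε) (k : ℕ) :
    Tendsto (fun x : ℝ ↦ log x ^ k / x ^ ε) atTop (𝓝 0) :=
  (isLittleO_log_rpow_rpow_atTop (k : ℝ) hε).tendsto_div_nhds_zero.congr fun x ↦ by
    rw [rpow_natCast]

lemma tendsto_floor_rpow_div_mul_log (ha : a < 1) :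
    Tendsto (fun x : ℝ ↦ ⌊x ^ a⌋₊ / x * log x) atTop (𝓝 0) := by
  refine squeeze_zero' ?_ ?_ (tendsto_log_pow_div_rpow (sub_pos.2 ha) 1)
  · filter_upwards [eventually_ge_atTop 1] with x hx
    have := log_nonneg hx
    positivity
  · filter_upwards [eventually_ge_atTop 1] with x hx
    have := log_nonneg hx
    calc ⌊x ^ a⌋₊ / x * log x ≤ x ^ a / x * log x := by
          gcongr
          exact Nat.floor_le (by positivity)
      _ = _ := by
          rw [rpow_sub (by linarith), rpow_one]
          field_simp

lemma tendsto_add_two_mul_log_floor_rpow_div (ha : 1 < a) :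
    Tendsto (fun x : ℝ ↦ (x + 2) * ((log ⌊x ^ a⌋₊ + 2) / ⌊x ^ a⌋₊) * log x) atTop (𝓝 0) := by
  have hlim := (tendsto_log_pow_div_rpow (sub_pos.2 ha) 2).const_mul (6 * (a + 2))
  rw [mul_zero] at hlim
  refine squeeze_zero' ?_ ?_ hlim
  · filter_upwards [eventually_ge_atTop 1] with x hx
    have := log_nonneg hx
    have := log_natCast_nonneg ⌊x ^ a⌋₊
    positivity
  · filter_upwards [eventually_ge_atTop 2, tendsto_log_atTop.eventually_ge_atTop 1] with x hx hlog
    have hx0 : 0 < x := by linarith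
    have hxa : x ≤ x ^ a := self_le_rpow_of_one_le (by linarith) ha.le
    have hfloor_le : (⌊x ^ a⌋₊ : ℝ) ≤ x ^ a := Nat.floor_le (by positivity)
    have hle_floor : x ^ a / 2 ≤ ⌊x ^ a⌋₊ := by linarith [Nat.lt_floor_add_one (x ^ a)]
    have hlog_floor : log ⌊x ^ a⌋₊ + 2 ≤ (a + 2) * log x := by
      have := log_le_log ((by positivity : 0 < x ^ a / 2).trans_le hle_floor) hfloor_le
      rw [log_rpow hx0] at this
      linarith
    calc (x + 2) * ((log ⌊x ^ a⌋₊ + 2) / ⌊x ^ a⌋₊) * log x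
        ≤ (3 * x) * ((a + 2) * log x / (x ^ a / 2)) * log x := by
          gcongr
          linarith
      _ = _ := by
          rw [rpow_sub hx0, rpow_one]
          field_simp
          norm_num

lemma eventually_cyclicCount_mul_log_log_log_div_le (ha : a < 1) : ∀ᶠ N : ℕ in atTop,
    cyclicCount N * log (log (log N)) / N ≤
      roughCount N ⌊log (log N) ^ a⌋₊ * log (log (log N)) / N +
        24 * (⌊log (log N) ^ a⌋₊ / log (log N) * log (log (log N))) := by
  filter_upwards [eventually_div_le_sum_primesOneMod ha,
    tendsto_log_log_natCast.eventually_gt_atTop 0,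
    tendsto_log_log_log_natCast.eventually_ge_atTop 0, eventually_gt_atTop 0]
    with N hsum hll hlll hN
  have : (0 : ℝ) < N := by exact_mod_cast hN
  have hcount := cyclicCount_le_of_le_sum_primesOneMod (N := N) (y := ⌊log (log N) ^ a⌋₊)
    (by positivity) fun p hp ↦ hsum p (Nat.mem_primesLE.1 hp).2.pos
      ((Nat.le_floor_iff (by positivity)).1 (Nat.mem_primesLE.1 hp).1)
  calc cyclicCount N * log (log (log N)) / N
      ≤ (roughCount N ⌊log (log N) ^ a⌋₊ + 3 * N * ⌊log (log N) ^ a⌋₊ / (log (log N) / 8)) *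
          log (log (log N)) / N := by gcongr
    _ = _ := by
        field_simp
        ring

lemma eventually_le_cyclicCount_mul_log_log_log_div (ha : 1 < a) : ∀ᶠ N : ℕ in atTop,
    roughCount N ⌊log (log N) ^ a⌋₊ * log (log (log N)) / N -
        19 * ((log (log N) + 2) * ((log ⌊log (log N) ^ a⌋₊ + 2) / ⌊log (log N) ^ a⌋₊) *
          log (log (log N))) ≤
      cyclicCount N * log (log (log N)) / N := by
  filter_upwards [tendsto_log_log_natCast.eventually (eventually_const_mul_rpow_le_exp 1 a),
    tendsto_log_natCast.eventually_gt_atTop 0, tendsto_log_log_natCast.eventually_ge_atTop 5,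
    tendsto_log_log_log_natCast.eventually_ge_atTop 0, eventually_gt_atTop 0]
    with N hexp hL hll hlll hN
  have hN0 : (0 : ℝ) < N := by exact_mod_cast hN
  rw [one_mul, exp_log hL] at hexp
  have hfive : 5 ≤ ⌊log (log N) ^ a⌋₊ := by
    refine Nat.le_floor ?_
    push_cast
    exact hll.trans (self_le_rpow_of_one_le (by linarith) ha.le)
  have hle : ⌊log (log N) ^ a⌋₊ ≤ N :=
    Nat.floor_le_of_le (by linarith [log_le_sub_one_of_pos hN0])
  have hcount := roughCount_sub_le_cyclicCount hfive hle (by linarith)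
  calc _ = (roughCount N ⌊log (log N) ^ a⌋₊ - N * (19 * (log (log N) + 2) *
          ((log ⌊log (log N) ^ a⌋₊ + 2) / ⌊log (log N) ^ a⌋₊))) * log (log (log N)) / N := by
        field_simp
    _ ≤ _ := by gcongr

theorem tendsto_cyclicCount_mul_log_log_log_div :
    Tendsto (fun N : ℕ ↦ cyclicCount N * log (log (log N)) / N) atTop
      (𝓝 (exp (-eulerMascheroniConstant))) := by
  have hcont : Tendsto (fun a : ℝ ↦ exp (-eulerMascheroniConstant) / a) (𝓝 1)
      (𝓝 (exp (-eulerMascheroniConstant))) := by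
    have := (tendsto_const_nhds (x := exp (-eulerMascheroniConstant))).div tendsto_id
      (one_ne_zero' ℝ)
    rwa [div_one] at this
  refine tendsto_order.2 ⟨fun c hc ↦ ?_, fun c hc ↦ ?_⟩
  · obtain ⟨a, hca, ha⟩ := ((hcont.mono_left nhdsWithin_le_nhds).eventually (lt_mem_nhds hc)
      |>.and (self_mem_nhdsWithin (s := Set.Ioi (1 : ℝ)))).exists
    have hlim := (tendsto_roughCount_mul_log_log_log_div (one_pos.trans ha)).sub
      (((tendsto_add_two_mul_log_floor_rpow_div ha).comp tendsto_log_log_natCast).const_mul 19)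
    rw [mul_zero, sub_zero] at hlim
    filter_upwards [hlim.eventually (lt_mem_nhds hca),
      eventually_le_cyclicCount_mul_log_log_log_div ha] with N hlt hle using hlt.trans_le hle
  · obtain ⟨a, hca, ha0, ha⟩ :=
      ((hcont.mono_left nhdsWithin_le_nhds).eventually (gt_mem_nhds hc)
        |>.and (Ioo_mem_nhdsLT (zero_lt_one' ℝ))).exists
    have hlim := (tendsto_roughCount_mul_log_log_log_div ha0).add
      (((tendsto_floor_rpow_div_mul_log ha).comp tendsto_log_log_natCast).const_mul 24)
    rw [mul_zero, add_zero] at hlim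
    filter_upwards [hlim.eventually (gt_mem_nhds hca),
      eventually_cyclicCount_mul_log_log_log_div_le ha] with N hlt hle using hle.trans_lt hlt

end CyclicDensity

/-! ### Regularly varying sequences -/

/-- Regular variation of index `α` for a sequence, in the normalised form
`(n + 1) (1 - f n / f (n + 1)) → α`. It lets one read off the increments of `f`. -/
def IsRegularlyVarying (f : ℕ → ℝ) (α : ℝ) : Prop :=
  Tendsto (fun n : ℕ ↦ (n + 1) * (1 - f n / f (n + 1))) atTop (𝓝 α)

lemma isRegularlyVarying_natCast : IsRegularlyVarying (fun n ↦ (n : ℝ)) 1 := by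
  refine tendsto_const_nhds.congr fun n ↦ ?_
  push_cast
  field_simp
  ring

lemma isRegularlyVarying_const {c : ℝ} (hc : c ≠ 0) : IsRegularlyVarying (fun _ ↦ c) 0 := by
  simp [IsRegularlyVarying, div_self hc]

namespace IsRegularlyVarying

variable {f g : ℕ → ℝ} {α β : ℝ}

lemma tendsto_div_succ (hf : IsRegularlyVarying f α) :
    Tendsto (fun n ↦ f n / f (n + 1)) atTop (𝓝 1) := by
  have hlim := (hf.mul tendsto_one_div_add_atTop_nhds_zero_nat).const_sub 1
  rw [mul_zero, sub_zero] at hlim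
  refine hlim.congr fun n ↦ ?_
  have : (n : ℝ) + 1 ≠ 0 := n.cast_add_one_ne_zero
  field_simp
  ring

lemma mul (hf : IsRegularlyVarying f α) (hg : IsRegularlyVarying g β) :
    IsRegularlyVarying (fun n ↦ f n * g n) (α + β) := by
  have hlim := (Tendsto.mul hf hg.tendsto_div_succ).add hg
  rw [mul_one] at hlim
  refine hlim.congr fun n ↦ ?_
  rw [mul_div_mul_comm]
  ring

lemma pow (hf : IsRegularlyVarying f α) (k : ℕ) :
    IsRegularlyVarying (fun n ↦ f n ^ k) (k * α) := by
  induction k with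
  | zero => simpa using isRegularlyVarying_const one_ne_zero
  | succ k ih =>
    convert! ih.mul hf using 1
    push_cast
    ring

lemma tendsto_mul_log_div (hf : IsRegularlyVarying f α) :
    Tendsto (fun n : ℕ ↦ (n + 1) * log (f (n + 1) / f n)) atTop (𝓝 α) := by
  have hupper := Tendsto.div hf hf.tendsto_div_succ one_ne_zero
  rw [div_one] at hupper
  refine tendsto_of_tendsto_of_tendsto_of_le_of_le' hf hupper ?_ ?_ <;>
    filter_upwards [hf.tendsto_div_succ.eventually_const_lt one_pos] with n hn
  · have := log_le_sub_one_of_pos hn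
    rw [← inv_div (f n), log_inv]
    gcongr
    linarith
  · have := log_le_sub_one_of_pos (inv_pos.2 hn)
    rw [inv_div] at this
    rw [Pi.div_apply, mul_div_assoc, sub_div, div_self hn.ne', one_div_div]
    gcongr

lemma log (hf : IsRegularlyVarying f α) (hf_top : Tendsto f atTop atTop) :
    IsRegularlyVarying (fun n ↦ log (f n)) 0 := by
  have hsucc : Tendsto (fun n ↦ f (n + 1)) atTop atTop := hf_top.comp (tendsto_add_atTop_nat 1)
  refine (hf.tendsto_mul_log_div.div_atTop (tendsto_log_atTop.comp hsucc)).congr' ?_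
  filter_upwards [hf_top.eventually_gt_atTop 0, hsucc.eventually_gt_atTop 1] with n hn hn'
  have := (log_pos hn').ne'
  simp only [Function.comp_apply]
  rw [log_div (by linarith) hn.ne']
  field_simp

lemma isEquivalent_sub (hf : IsRegularlyVarying f α) (hα : α ≠ 0)
    (hf_ne : ∀ᶠ n in atTop, f n ≠ 0) :
    (fun n ↦ f (n + 1) - f n) ~[atTop] fun n ↦ α * f (n + 1) / (n + 1) := by
  have hequiv : (fun n : ℕ ↦ ((n : ℝ) + 1) * (1 - f n / f (n + 1))) ~[atTop] fun _ ↦ α :=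
    (isEquivalent_const_iff_tendsto hα).2 hf
  refine ((hequiv.mul (.refl (u := fun n : ℕ ↦ f (n + 1) / (n + 1)))).congr_left ?_).congr_right
    (.of_forall fun n ↦ (mul_div_assoc α _ _).symm)
  filter_upwards [(tendsto_add_atTop_nat 1).eventually hf_ne] with n hn
  have : (n : ℝ) + 1 ≠ 0 := n.cast_add_one_ne_zero
  simp only [Pi.mul_apply]
  field_simp

end IsRegularlyVarying

lemma isEquivalent_sum_range_of_isEquivalent_sub {f h : ℕ → ℝ} (hh : 0 ≤ h)
    (hsum : Tendsto (fun n ↦ ∑ i ∈ range n, h i) atTop atTop)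
    (hsub : (fun n ↦ f (n + 1) - f n) ~[atTop] h) :
    (fun n ↦ ∑ i ∈ range n, h i) ~[atTop] f := by
  have hconst : (fun _ : ℕ ↦ f 0) =o[atTop] fun n ↦ ∑ i ∈ range n, h i :=
    isLittleO_const_left.2 (.inr (tendsto_norm_atTop_atTop.comp hsum))
  refine IsEquivalent.symm ((hsub.isLittleO.sum_range hh hsum).add hconst |>.congr_left fun n ↦ ?_)
  simp only [Pi.sub_apply]
  rw [sum_sub_distrib, sum_range_sub]
  ring

/-! ### The `n`-th cyclic number -/

lemma infinite_setOf_isCyclicNum : {n | IsCyclicNum n}.Infinite :=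
  Nat.infinite_setOfPred_prime.mono fun p hp ↦
    ⟨hp.pos, by
      rw [Nat.totient_prime hp]
      exact (Nat.coprime_self_sub_right hp.pos).2 p.coprime_one_right⟩

lemma cyclicCount_cyclicNum {n : ℕ} (hn : 1 ≤ n) : cyclicCount (cyclicNum n) = n := by
  rw [cyclicCount, Nat.floor_natCast, ← Nat.count_eq_card_filter_range, cyclicNum,
    Nat.count_nth_succ_of_infinite infinite_setOf_isCyclicNum, Nat.sub_add_cancel hn]

lemma le_cyclicNum {n : ℕ} (hn : 1 ≤ n) : n ≤ cyclicNum n := by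
  calc n = #{m ∈ Ioc 0 (cyclicNum n) | IsCyclicNum m} := by
        rw [← cyclicCount_natCast, cyclicCount_cyclicNum hn]
    _ ≤ #(Ioc 0 (cyclicNum n)) := card_filter_le _ _
    _ = cyclicNum n := by simp

lemma tendsto_cyclicNum : Tendsto cyclicNum atTop atTop :=
  tendsto_atTop_mono' atTop ((eventually_ge_atTop 1).mono fun _ ↦ le_cyclicNum) tendsto_id

lemma tendsto_mul_log_log_log_cyclicNum_div :
    Tendsto (fun n : ℕ ↦ n * log (log (log (cyclicNum n))) / cyclicNum n) atTop
      (𝓝 (exp (-eulerMascheroniConstant))) := by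
  refine (tendsto_cyclicCount_mul_log_log_log_div.comp tendsto_cyclicNum).congr' ?_
  filter_upwards [eventually_ge_atTop 1] with n hn
  simp only [Function.comp_apply, cyclicCount_cyclicNum hn]

lemma isEquivalent_cyclicNum :
    (fun n ↦ (cyclicNum n : ℝ)) ~[atTop]
      fun n ↦ exp eulerMascheroniConstant * (n * log (log (log (cyclicNum n)))) := by
  refine IsEquivalent.symm ((isEquivalent_iff_tendsto_one ?_).2 ?_)
  · filter_upwards [tendsto_cyclicNum.eventually_gt_atTop 0] with n hn using by positivity
  · have hlim := tendsto_mul_log_log_log_cyclicNum_div.const_mul (exp eulerMascheroniConstant)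
    rw [← exp_add, add_neg_cancel, exp_zero] at hlim
    exact hlim.congr fun n ↦ (mul_div_assoc _ _ _).symm

lemma isLittleO_log_log_log_log_log :
    (fun x : ℝ ↦ log (log (log (log x)))) =o[atTop] log := by
  have hlog_log : (fun x : ℝ ↦ log (log x)) =o[atTop] log :=
    isLittleO_log_id_atTop.comp_tendsto tendsto_log_atTop
  have htop := tendsto_log_atTop.comp tendsto_log_atTop
  exact (hlog_log.comp_tendsto htop).trans
    ((hlog_log.comp_tendsto tendsto_log_atTop).trans hlog_log)

lemma isEquivalent_log_cyclicNum : (fun n ↦ log (cyclicNum n)) ~[atTop] fun n : ℕ ↦ log n := by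
  have hcast : Tendsto (fun n ↦ (cyclicNum n : ℝ)) atTop atTop :=
    tendsto_natCast_atTop_atTop.comp tendsto_cyclicNum
  have hlog_quot : (fun n : ℕ ↦ log (n * log (log (log (cyclicNum n))) / cyclicNum n)) =o[atTop]
      fun n ↦ log (cyclicNum n) :=
    (tendsto_mul_log_log_log_cyclicNum_div.log (exp_pos _).ne').isBigO_one ℝ |>.trans_isLittleO
      (isLittleO_const_left.2 (.inr (tendsto_norm_atTop_atTop.comp (tendsto_log_atTop.comp hcast))))
  refine IsEquivalent.symm ((hlog_quot.sub
    (isLittleO_log_log_log_log_log.comp_tendsto hcast)).congr' ?_ .rfl)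
  filter_upwards [eventually_gt_atTop 0, hcast.eventually_gt_atTop 0,
    (tendsto_log_log_log_natCast.comp tendsto_cyclicNum).eventually_gt_atTop 0] with n hn hc hlll
  simp only [Function.comp_apply, Pi.sub_apply] at hlll ⊢
  rw [log_div (by positivity) hc.ne', log_mul (by positivity) hlll.ne']
  ring

theorem isEquivalent_cyclicNum_explicit :
    (fun n ↦ (cyclicNum n : ℝ)) ~[atTop]
      fun n : ℕ ↦ exp eulerMascheroniConstant * (n * log (log (log n))) := by
  have hlll := (isEquivalent_log_cyclicNum.log tendsto_log_natCast).log tendsto_log_log_natCast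
  exact isEquivalent_cyclicNum.trans (.mul .refl (.mul .refl hlll))

/-! ### Power sums -/

lemma tendsto_sum_range_cyclicNum_succ_pow (k : ℕ) :
    Tendsto (fun n ↦ ∑ i ∈ range n, (cyclicNum (i + 1) : ℝ) ^ k) atTop atTop := by
  refine tendsto_atTop_mono (fun n ↦ ?_) tendsto_natCast_atTop_atTop
  calc (n : ℝ) = ∑ _i ∈ range n, (1 : ℝ) := by simp
    _ ≤ _ := sum_le_sum fun i _ ↦
        one_le_pow₀ (by exact_mod_cast i.succ_pos.trans_le (le_cyclicNum i.succ_pos))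

lemma isRegularlyVarying_log_log_log :
    IsRegularlyVarying (fun n ↦ log (log (log n))) 0 :=
  ((isRegularlyVarying_natCast.log tendsto_natCast_atTop_atTop).log tendsto_log_natCast).log
    tendsto_log_log_natCast

/-- The main term in the sum of the `k`-th powers of the first `n` cyclic numbers. -/
noncomputable def powSumMainTerm (k n : ℕ) : ℝ :=
  (n : ℝ) ^ (k + 1) * exp (k * eulerMascheroniConstant) * log (log (log n)) ^ k / (k + 1)

lemma isRegularlyVarying_powSumMainTerm (k : ℕ) :
    IsRegularlyVarying (powSumMainTerm k) (k + 1) := by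
  have hk : ((k : ℝ) + 1)⁻¹ ≠ 0 := inv_ne_zero k.cast_add_one_ne_zero
  have hprod := (((isRegularlyVarying_natCast.pow (k + 1)).mul
    (isRegularlyVarying_const (exp_pos (k * eulerMascheroniConstant)).ne')).mul
    (isRegularlyVarying_log_log_log.pow k)).mul (isRegularlyVarying_const hk)
  convert! hprod using 1
  push_cast
  ring

lemma eventually_powSumMainTerm_ne_zero (k : ℕ) : ∀ᶠ n in atTop, powSumMainTerm k n ≠ 0 := by
  filter_upwards [eventually_gt_atTop 0, tendsto_log_log_log_natCast.eventually_gt_atTop 0]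
    with n hn hlll
  unfold powSumMainTerm
  positivity

lemma isEquivalent_cyclicNum_pow (k : ℕ) :
    (fun n ↦ (cyclicNum n : ℝ) ^ k) ~[atTop] fun n ↦ (k + 1) * powSumMainTerm k n / n := by
  refine (isEquivalent_cyclicNum_explicit.pow k).congr_right ?_
  filter_upwards [eventually_gt_atTop 0] with n hn
  simp only [Pi.pow_apply, powSumMainTerm]
  rw [mul_pow, mul_pow, ← exp_nat_mul]
  field_simp
  ring

theorem isEquivalent_sum_range_cyclicNum_succ_pow (k : ℕ) :
    (fun n ↦ ∑ i ∈ range n, (cyclicNum (i + 1) : ℝ) ^ k) ~[atTop] powSumMainTerm k := by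
  have hpow := (isEquivalent_cyclicNum_pow k).comp_tendsto (tendsto_add_atTop_nat 1)
  have hincr := (isRegularlyVarying_powSumMainTerm k).isEquivalent_sub k.cast_add_one_ne_zero
    (eventually_powSumMainTerm_ne_zero k)
  refine isEquivalent_sum_range_of_isEquivalent_sub (fun i ↦ by positivity)
    (tendsto_sum_range_cyclicNum_succ_pow k) (hincr.trans (hpow.symm.congr_left ?_))
  exact .of_forall fun n ↦ by simp

end CyclicNumbers

theorem sum_pow_cyclicNum_isEquivalent_explicit (k : ℕ) (hk : 0 < k) :
    (fun n : ℕ => ∑ j ∈ Finset.Icc 1 n, ((cyclicNum j : ℝ)) ^ k) ~[atTop]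
      (fun n : ℕ =>
        (n : ℝ) ^ (k + 1) * Real.exp (k * Real.eulerMascheroniConstant) *
          (Real.log (Real.log (Real.log n))) ^ k / (k + 1)) := by
  refine (CyclicNumbers.isEquivalent_sum_range_cyclicNum_succ_pow k).congr_left
    (.of_forall fun n ↦ ?_)
  beta_reduce
  rw [Finset.range_eq_Ico, Finset.sum_Ico_add' (fun j ↦ (cyclicNum j : ℝ) ^ k), zero_add,
    Finset.Ico_add_one_right_eq_Icc]
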